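/- arXiv:0806.4012 — 8 statements merged into one kernel-verified Lean document; each statement's English description precedes it below -/
import Mathlib

section
/- Let P be a finite pure simplicial poset of rank k, let σ = (σ_1, …, σ_m) be a composition of k, and let π = (π_1, …, π_m) be a rearrangement (permutation) of the parts of σ. If π_1 ≥ σ_1, then the face-to-flag degree sequence d^σ(P) majorizes the face-to-flag degree sequence d^π(P), i.e. d^σ(P) ⊵ d^π(P). -/
/-- `rk` is the rank function of a simplicial poset: every principal order
ideal `[⊥, x]` is order-isomorphic to the Boolean lattice of rank `rk x`
(the lattice of all subsets of a set with `rk x` elements). -/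
def IsSimplicial {P : Type*} [PartialOrder P] [OrderBot P] (rk : P → ℕ) : Prop :=
  ∀ x : P, Nonempty (Set.Icc (⊥ : P) x ≃o Finset (Fin (rk x)))

/-- The face-to-flag degree `d^σ(F)`: the number of chains
`F = X_1 < X_2 < ⋯ < X_m` with `rk (X_j) = σ_1 + ⋯ + σ_j` for all `j`. -/
noncomputable def flagDeg {P : Type*} [PartialOrder P] (rk : P → ℕ) {m : ℕ} [NeZero m]
    (σ : Fin m → ℕ) (F : P) : ℕ :=
  Nat.card {X : Fin m → P // X 0 = F ∧ StrictMono X ∧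
    ∀ j : Fin m, rk (X j) = ∑ i ∈ Finset.Iic j, σ i}

/-- The face-to-flag degree sequence `d^σ(P)`, as the multiset of degrees
`d^σ(F)` over all rank-`σ_1` elements `F`. -/
noncomputable def degSeq {P : Type*} [Fintype P] [PartialOrder P] (rk : P → ℕ) {m : ℕ}
    [NeZero m] (σ : Fin m → ℕ) : Multiset ℕ :=
  (Finset.univ.filter (fun F : P => rk F = σ 0)).val.map (flagDeg rk σ)

/-- Majorization `a ⊵ b` of multisets of natural numbers: the total sums agree and,
listing both in weakly decreasing order (padding with zeros, which is immaterial
here), every partial sum of `a` is at least the corresponding partial sum of `b`. -/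
def Majorizes (a b : Multiset ℕ) : Prop :=
  a.sum = b.sum ∧
  ∀ r : ℕ, ((b.sort (· ≥ ·)).take r).sum ≤ ((a.sort (· ≥ ·)).take r).sum

open Finset in
theorem list_take_bound : ∀ (L l : List ℕ) (r : ℕ), L.Pairwise (· ≥ ·) → l.Sublist L → l.length ≤ r → l.sum ≤ (L.take r).sum := by
  intro L
  induction L with
  | nil => intro l r _ h _; simp [List.sublist_nil.1 h]
  | cons x L ih =>
    intro l r hp hs hl
    rw [List.pairwise_cons] at hp
    cases l with
    | nil => simp
    | cons y l =>
      cases r with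
      | zero => simp at hl
      | succ r =>
        simp only [List.take_succ_cons, List.sum_cons]
        have hl' : l.length ≤ r := by simpa using hl
        cases hs with
        | cons _ h =>
          have := hp.1 y (h.subset (by simp))
          have := ih l r hp.2 ((List.sublist_cons_self y l).trans h) hl'
          omega
        | cons_cons _ h =>
          have := ih l r hp.2 h hl'
          omega

theorem take_sort_ge {α : Type*} (s S : Finset α) (f : α → ℕ) (hS : S ⊆ s) (r : ℕ) (hr : S.card ≤ r) :
    ∑ x ∈ S, f x ≤ (((s.val.map f).sort (· ≥ ·)).take r).sum := by
  have h1 : S.val.map f ≤ s.val.map f := Multiset.map_le_map (Finset.val_le_iff.2 hS)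
  have h2 : ((S.val.map f).sort (· ≥ ·)).Sublist ((s.val.map f).sort (· ≥ ·)) := by
    apply List.sublist_of_subperm_of_pairwise (r := (· ≥ ·))
    · rw [← Multiset.coe_le]; simpa using h1
    · exact Multiset.pairwise_sort _ _
    · exact Multiset.pairwise_sort _ _
  have := list_take_bound _ _ r (Multiset.pairwise_sort _ _) h2 (by simpa using hr)
  refine le_trans (le_of_eq ?_) this
  rw [← Multiset.sum_coe, Multiset.sort_eq]; rfl

theorem exists_of_take {α : Type*} (s : Finset α) (f : α → ℕ) (r : ℕ) :
    ∃ S ⊆ s, S.card ≤ r ∧ (((s.val.map f).sort (· ≥ ·)).take r).sum = ∑ x ∈ S, f x := by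
  classical
  have h : ∀ (u : List ℕ) (v : Multiset α), (u : Multiset ℕ) ≤ v.map f → ∃ w ≤ v, w.map f = u := by
    intro u
    induction u with
    | nil => intro v _; exact ⟨0, by simp, by simp⟩
    | cons x u ih =>
      intro v hv
      have hx : x ∈ v.map f := Multiset.mem_of_le hv (by simp)
      obtain ⟨y, hy, rfl⟩ := Multiset.mem_map.1 hx
      obtain ⟨v', rfl⟩ := Multiset.exists_cons_of_mem hy
      rw [Multiset.map_cons, ← Multiset.cons_coe, Multiset.cons_le_cons_iff] at hv
      obtain ⟨w, hw, he⟩ := ih v' hv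
      exact ⟨y ::ₘ w, (Multiset.cons_le_cons_iff _).2 hw, by simp [he]⟩
  obtain ⟨w, hw, he⟩ := h (((s.val.map f).sort (· ≥ ·)).take r) s.val (by
    conv_rhs => rw [← Multiset.sort_eq (s.val.map f) (· ≥ ·)]
    exact Multiset.coe_le.2 (List.take_sublist _ _).subperm)
  refine ⟨⟨w, Multiset.nodup_of_le hw s.nodup⟩, Finset.val_le_iff.1 hw, ?_, ?_⟩
  · have := congrArg Multiset.card he
    simp only [Multiset.card_map, Multiset.coe_card, List.length_take] at this
    show Multiset.card w ≤ r
    omega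
  · rw [← Multiset.sum_coe, ← he]; rfl

theorem match_lemma {α β : Type*} [DecidableEq α] [DecidableEq β] (S : Finset β) (N : β → Finset α) (u : α → ℕ) (v : β → ℕ)
    (h1 : ∀ G ∈ S, ∀ F ∈ N G, v G ≤ u F)
    (h2 : ∀ S1 ⊆ S, ∑ G ∈ S1, v G ≤ ∑ F ∈ S1.biUnion N, u F) :
    ∃ S' ⊆ S.biUnion N, S'.card ≤ S.card ∧ ∑ G ∈ S, v G ≤ ∑ F ∈ S', u F := by
  obtain ⟨S1, hS1, hmax⟩ := Finset.exists_max_image S.powerset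
    (fun A => (A.card : ℤ) - (A.biUnion N).card) ⟨∅, by simp⟩
  rw [Finset.mem_powerset] at hS1
  have h0 := hmax ∅ (by simp)
  simp only [Finset.card_empty, Finset.biUnion_empty, Nat.cast_zero, sub_zero] at h0
  have hall := (Finset.all_card_le_biUnion_card_iff_exists_injective
    (fun G : {G // G ∈ S \ S1} => N G.1 \ S1.biUnion N)).1 (by
      intro A
      set A' : Finset β := A.map (Function.Embedding.subtype _) with hA'
      have hA'c : A'.card = A.card := by simp [hA']
      have hA's : A' ⊆ S \ S1 := by
        intro x hx
        simp only [hA', Finset.mem_map, Function.Embedding.coe_subtype] at hx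
        obtain ⟨y, _, rfl⟩ := hx
        exact y.2
      have hd : Disjoint S1 A' := by
        rw [Finset.disjoint_left]; intro x hx hx'
        exact (Finset.mem_sdiff.1 (hA's hx')).2 hx
      have hm := hmax (S1 ∪ A') (by
        rw [Finset.mem_powerset]
        exact Finset.union_subset hS1 (hA's.trans Finset.sdiff_subset))
      have e1 : (S1 ∪ A').biUnion N = S1.biUnion N ∪ A.biUnion (fun G => N G.1 \ S1.biUnion N) := by
        ext x
        simp only [hA', Finset.mem_biUnion, Finset.mem_union, Finset.mem_sdiff, Finset.mem_map, Function.Embedding.coe_subtype]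
        constructor
        · rintro ⟨G, hG | ⟨G', hG', rfl⟩, hx⟩
          · exact Or.inl ⟨G, hG, hx⟩
          · by_cases hh : ∃ a ∈ S1, x ∈ N a
            · exact Or.inl hh
            · exact Or.inr ⟨G', hG', hx, hh⟩
        · rintro (⟨G, hG, hx⟩ | ⟨G, hG, hx, _⟩)
          · exact ⟨G, Or.inl hG, hx⟩
          · exact ⟨G, Or.inr ⟨G, hG, rfl⟩, hx⟩
      have e2 := Finset.card_union_le (S1.biUnion N) (A.biUnion (fun G => N G.1 \ S1.biUnion N))
      rw [e1, Finset.card_union_of_disjoint hd, hA'c] at hm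
      push_cast at hm
      omega)
  obtain ⟨f, hf, hfm⟩ := hall
  have hfm1 : ∀ x, f x ∈ N x.1 := fun x => (Finset.mem_sdiff.1 (hfm x)).1
  have hd : Disjoint (S1.biUnion N) (Finset.univ.map ⟨f, hf⟩) := by
    rw [Finset.disjoint_left]; intro x hx hx'
    simp only [Finset.mem_map, Finset.mem_univ, true_and, Function.Embedding.coeFn_mk] at hx'
    obtain ⟨y, rfl⟩ := hx'
    exact (Finset.mem_sdiff.1 (hfm y)).2 hx
  refine ⟨S1.biUnion N ∪ Finset.univ.map ⟨f, hf⟩, ?_, ?_, ?_⟩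
  · apply Finset.union_subset (Finset.biUnion_subset_biUnion_of_subset_left _ hS1)
    intro x hx
    simp only [Finset.mem_map, Finset.mem_univ, true_and, Function.Embedding.coeFn_mk] at hx
    obtain ⟨y, rfl⟩ := hx
    exact Finset.mem_biUnion.2 ⟨y.1, (Finset.mem_sdiff.1 y.2).1, hfm1 y⟩
  · rw [Finset.card_union_of_disjoint hd, Finset.card_map, Finset.card_univ, Fintype.card_coe]
    have := Finset.card_sdiff_add_card_eq_card hS1
    omega
  · rw [Finset.sum_union hd, ← Finset.sum_sdiff hS1, Finset.sum_map, add_comm]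
    apply add_le_add (h2 S1 hS1)
    rw [← Finset.sum_coe_sort (S \ S1)]
    apply Finset.sum_le_sum
    intro x _
    exact h1 _ (Finset.mem_sdiff.1 x.2).1 _ (hfm1 x)

section cnt
open Classical in
noncomputable def fcnt (n : ℕ) {m : ℕ} [NeZero m] (σ : Fin m → ℕ) (A : Finset (Fin n)) : ℕ :=
  Nat.card {g : Fin n → Fin m // (∀ i, (Finset.univ.filter (fun x => g x = i)).card = σ i) ∧
    Finset.univ.filter (fun x => g x = 0) = A}

noncomputable def ftot (n : ℕ) {m : ℕ} (σ : Fin m → ℕ) : ℕ :=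
  Nat.card {g : Fin n → Fin m // (∀ i, (Finset.univ.filter (fun x => g x = i)).card = σ i)}

theorem fcnt_symm (n : ℕ) {m : ℕ} [NeZero m] (σ : Fin m → ℕ) (A B : Finset (Fin n)) (h : A.card = B.card) :
    fcnt n σ A = fcnt n σ B := by
  classical
  let e : {x // x ∈ A} ≃ {x // x ∈ B} := Finset.equivOfCardEq h
  let τ : Equiv.Perm (Fin n) := e.extendSubtype
  have hτ : ∀ x, τ x ∈ B ↔ x ∈ A := by
    intro x
    by_cases hx : x ∈ A
    · simp only [hx, iff_true]; exact e.extendSubtype_mem x hx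
    · simp only [hx, iff_false]; exact e.extendSubtype_not_mem x hx
  unfold fcnt
  apply Nat.card_congr
  refine Equiv.subtypeEquiv (Equiv.arrowCongr τ (Equiv.refl _)) ?_
  intro g
  have key : ∀ i, (Finset.univ.filter (fun x => (Equiv.arrowCongr τ (Equiv.refl (Fin m))) g x = i)) =
      (Finset.univ.filter (fun x => g x = i)).map τ.toEmbedding := by
    intro i; ext x
    simp [Equiv.arrowCongr]
  have hB : B = A.map τ.toEmbedding := by
    ext x
    rw [Finset.mem_map_equiv, ← hτ]; simp
  simp only [key, Finset.card_map]
  rw [hB, Finset.map_inj]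

theorem ftot_perm (n : ℕ) {m : ℕ} (σ : Fin m → ℕ) (e : Equiv.Perm (Fin m)) :
    ftot n (σ ∘ e) = ftot n σ := by
  unfold ftot
  apply Nat.card_congr
  refine Equiv.subtypeEquiv (Equiv.arrowCongr (Equiv.refl _) e) ?_
  intro g
  simp only [Equiv.arrowCongr, Equiv.coe_fn_mk, Function.comp_apply, Equiv.refl_symm, Equiv.refl_apply]
  rw [e.forall_congr_left]
  simp [Equiv.apply_eq_iff_eq_symm_apply]

theorem fcnt_mul (n : ℕ) {m : ℕ} [NeZero m] (σ : Fin m → ℕ) (A : Finset (Fin n)) (h : A.card = σ 0) :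
    fcnt n σ A * n.choose (σ 0) = ftot n σ := by
  classical
  have h1 : ftot n σ = ∑ B ∈ Finset.powersetCard (σ 0) (Finset.univ : Finset (Fin n)), fcnt n σ B := by
    unfold ftot fcnt
    simp only [Nat.card_eq_fintype_card, Fintype.card_subtype]
    rw [Finset.card_eq_sum_card_fiberwise (f := fun g : Fin n → Fin m => Finset.univ.filter (fun x => g x = 0))
      (t := Finset.powersetCard (σ 0) (Finset.univ : Finset (Fin n)))]
    · simp only [Finset.filter_filter]
    · intro g hg
      simp only [Finset.coe_filter, Finset.mem_univ, true_and, Set.mem_ofPred_eq] at hg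
      simp [Finset.mem_powersetCard, hg]
  rw [h1, Finset.sum_congr rfl (fun B hB => fcnt_symm n σ B A (by
    rw [(Finset.mem_powersetCard.1 hB).2, h]))]
  simp [mul_comm]
end cnt

section pos
variable {P : Type*} [Fintype P] [PartialOrder P] [OrderBot P]

theorem rank_card {rk : P → ℕ} (hs : IsSimplicial rk) {T : P} {n : ℕ}
    (φ : Set.Icc (⊥ : P) T ≃o Finset (Fin n)) (x : Set.Icc (⊥ : P) T) : (φ x).card = rk x.1 := by
  classical
  obtain ⟨ψ⟩ := hs x.1
  let E : Set.Icc (⊥ : P) x.1 ≃ {B // B ∈ (φ x).powerset} :=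
    { toFun := fun y => ⟨φ ⟨y.1, bot_le, y.2.2.trans x.2.2⟩, by
        rw [Finset.mem_powerset]; exact φ.monotone y.2.2⟩
      invFun := fun B => ⟨(φ.symm B.1).1, bot_le, by
        have := Finset.mem_powerset.1 B.2
        have h2 : φ.symm B.1 ≤ x := by rw [OrderIso.symm_apply_le]; exact this
        exact h2⟩
      left_inv := fun y => by simp
      right_inv := fun B => Subtype.ext (φ.apply_symm_apply B.1) }
  have h := Nat.card_congr (E.symm.trans ψ.toEquiv)
  rw [Nat.card_eq_fintype_card, Nat.card_eq_fintype_card, Fintype.card_coe, Finset.card_powerset,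
    Fintype.card_finset, Fintype.card_fin] at h
  exact Nat.pow_right_injective (le_refl 2) h

open Classical in
theorem count_below {rk : P → ℕ} (hs : IsSimplicial rk) (T : P) (a : ℕ) :
    (Finset.univ.filter (fun F : P => F ≤ T ∧ rk F = a)).card = (rk T).choose a := by
  obtain ⟨φ⟩ := hs T
  have : (rk T).choose a = (Finset.powersetCard a (Finset.univ : Finset (Fin (rk T)))).card := by simp
  rw [this]
  symm
  refine Finset.card_bij (fun B _ => (φ.symm B).1) ?_ ?_ ?_
  · intro B hB
    have h := rank_card hs φ (φ.symm B)
    rw [OrderIso.apply_symm_apply, (Finset.mem_powersetCard.1 hB).2] at h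
    simp only [Finset.mem_filter, Finset.mem_univ, true_and]
    exact ⟨(φ.symm B).2.2, h.symm⟩
  · intro B _ C _ h
    exact φ.symm.injective (Subtype.ext h)
  · intro F hF
    simp only [Finset.mem_filter, Finset.mem_univ, true_and] at hF
    refine ⟨φ ⟨F, bot_le, hF.1⟩, ?_, by simp⟩
    rw [Finset.mem_powersetCard, rank_card hs φ]
    exact ⟨Finset.subset_univ _, hF.2⟩

open Classical in
theorem count_between {rk : P → ℕ} (hs : IsSimplicial rk) (F T : P) (hFT : F ≤ T) (b : ℕ) (hb : rk F ≤ b) :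
    (Finset.univ.filter (fun G : P => rk G = b ∧ F ≤ G ∧ G ≤ T)).card = (rk T - rk F).choose (b - rk F) := by
  obtain ⟨φ⟩ := hs T
  set A := φ ⟨F, bot_le, hFT⟩ with hA
  have hAc : A.card = rk F := rank_card hs φ _
  have : (rk T - rk F).choose (b - rk F) = (Finset.powersetCard (b - rk F) (Finset.univ \ A)).card := by
    rw [Finset.card_powersetCard, Finset.card_sdiff_of_subset (Finset.subset_univ _), hAc]; simp
  rw [this]
  symm
  refine Finset.card_bij (fun B _ => (φ.symm (A ∪ B)).1) ?_ ?_ ?_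
  · intro B hB
    rw [Finset.mem_powersetCard] at hB
    have hd : Disjoint A B := (Finset.disjoint_of_subset_left hB.1 Finset.sdiff_disjoint).symm
    have h := rank_card hs φ (φ.symm (A ∪ B))
    rw [OrderIso.apply_symm_apply, Finset.card_union_of_disjoint hd, hB.2, hAc] at h
    simp only [Finset.mem_filter, Finset.mem_univ, true_and]
    refine ⟨by omega, ?_, (φ.symm (A ∪ B)).2.2⟩
    have h2 : (⟨F, bot_le, hFT⟩ : Set.Icc (⊥ : P) T) ≤ φ.symm (A ∪ B) := by
      rw [OrderIso.le_symm_apply]; exact Finset.subset_union_left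
    exact h2
  · intro B hB C hC h
    have h := φ.symm.injective (Subtype.ext h)
    rw [Finset.mem_powersetCard] at hB hC
    have hd : Disjoint A B := (Finset.disjoint_of_subset_left hB.1 Finset.sdiff_disjoint).symm
    have hd' : Disjoint A C := (Finset.disjoint_of_subset_left hC.1 Finset.sdiff_disjoint).symm
    rw [← Finset.union_sdiff_cancel_left hd, h, Finset.union_sdiff_cancel_left hd']
  · intro G hG
    simp only [Finset.mem_filter, Finset.mem_univ, true_and] at hG
    have hsub : A ⊆ φ ⟨G, bot_le, hG.2.2⟩ := φ.monotone hG.2.1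
    refine ⟨φ ⟨G, bot_le, hG.2.2⟩ \ A, ?_, ?_⟩
    · rw [Finset.mem_powersetCard, Finset.card_sdiff_of_subset hsub, rank_card hs φ, hAc]
      exact ⟨Finset.sdiff_subset_sdiff (Finset.subset_univ _) (le_refl _), by rw [hG.1]⟩
    · simp only [Finset.union_sdiff_of_subset hsub, OrderIso.symm_apply_apply]

theorem chain_count {rk : P → ℕ} (hs : IsSimplicial rk) {m : ℕ} [NeZero m] (σ : Fin m → ℕ) (hpos : ∀ i, 0 < σ i)
    (k : ℕ) (hsum : ∑ i, σ i = k) (T F : P) (hT : rk T = k) (hFT : F ≤ T)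
    (φ : Set.Icc (⊥ : P) T ≃o Finset (Fin k)) :
    Nat.card {X : Fin m → P // (X 0 = F ∧ StrictMono X ∧ ∀ j : Fin m, rk (X j) = ∑ i ∈ Finset.Iic j, σ i) ∧ X ⊤ = T}
      = fcnt k σ (φ ⟨F, bot_le, hFT⟩) := by
  classical
  unfold fcnt
  symm
  have hsm : StrictMono (fun j : Fin m => ∑ i ∈ Finset.Iic j, σ i) := by
    intro i j hij
    refine Finset.sum_lt_sum_of_subset (i := j) (Finset.Iic_subset_Iic.2 hij.le) (by simp) (by simpa using hij) (hpos j) (fun _ _ _ => Nat.zero_le _)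
  have hIic : ∀ (g : Fin k → Fin m) (j : Fin m), (Finset.univ.filter (fun x => g x ≤ j)).card =
      ∑ i ∈ Finset.Iic j, (Finset.univ.filter (fun x => g x = i)).card := by
    intro g j
    rw [Finset.card_eq_sum_card_fiberwise (f := g) (t := Finset.Iic j)]
    · apply Finset.sum_congr rfl
      intro i hi
      rw [Finset.filter_filter]
      congr 1
      apply Finset.filter_congr
      intro x _
      rw [Finset.mem_Iic] at hi
      constructor
      · exact fun h => h.2
      · intro h; exact ⟨h ▸ hi, h⟩
    · intro x hx; simpa using hx
  have hz : ∀ g : Fin k → Fin m, (Finset.univ.filter (fun x => g x ≤ 0)) = Finset.univ.filter (fun x => g x = 0) := by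
    intro g; apply Finset.filter_congr; intro x _; exact Fin.le_zero_iff'
  have hTop : φ ⟨T, bot_le, le_refl T⟩ = Finset.univ := by
    apply Finset.eq_univ_of_card
    rw [rank_card hs φ]; simpa using hT
  apply Nat.card_congr
  refine Equiv.ofBijective (fun g => ⟨fun j => (φ.symm (Finset.univ.filter (fun x => g.1 x ≤ j))).1, ⟨?_, ?_, ?_⟩, ?_⟩) ⟨?_, ?_⟩
  · dsimp only
    rw [hz, g.2.2]; simp
  · have hr : ∀ j, rk (φ.symm (Finset.univ.filter (fun x => g.1 x ≤ j))).1 = ∑ i ∈ Finset.Iic j, σ i := by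
      intro j
      rw [← rank_card hs φ, OrderIso.apply_symm_apply, hIic]
      exact Finset.sum_congr rfl (fun i _ => g.2.1 i)
    intro i j hij
    have hle : φ.symm (Finset.univ.filter (fun x => g.1 x ≤ i)) ≤ φ.symm (Finset.univ.filter (fun x => g.1 x ≤ j)) := by
      apply φ.symm.monotone
      intro x hx
      simp only [Finset.mem_filter, Finset.mem_univ, true_and] at hx ⊢
      exact hx.trans hij.le
    refine lt_of_le_of_ne hle ?_
    intro he
    have := hsm hij
    dsimp only at this he
    rw [← hr, ← hr, he] at this
    exact lt_irrefl _ this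
  · intro j
    rw [← rank_card hs φ, OrderIso.apply_symm_apply, hIic]
    exact Finset.sum_congr rfl (fun i _ => g.2.1 i)
  · have : (Finset.univ.filter (fun x => g.1 x ≤ ⊤)) = Finset.univ := by simp
    dsimp only
    rw [this, ← hTop]; simp
  · intro g g' h
    have h' : ∀ j x, g.1 x ≤ j ↔ g'.1 x ≤ j := by
      intro j x
      have h2 := φ.symm.injective (Subtype.ext (congrFun (congrArg Subtype.val h) j))
      have h3 := Finset.ext_iff.1 h2 x
      simpa using h3
    apply Subtype.ext
    funext x
    exact le_antisymm ((h' _ x).2 le_rfl) ((h' _ x).1 le_rfl)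
  · rintro ⟨X, ⟨hX0, hXm, hXr⟩, hXT⟩
    have hXle : ∀ j, X j ≤ T := fun j => hXT ▸ hXm.monotone le_top
    let A : Fin m → Finset (Fin k) := fun j => φ ⟨X j, bot_le, hXle j⟩
    have hAm : Monotone A := fun i j hij => φ.monotone (hXm.monotone hij)
    have hAT : A ⊤ = Finset.univ := by
      rw [← hTop]; simp only [A, hXT]
    have hne : ∀ x, (Finset.univ.filter (fun j => x ∈ A j)).Nonempty := fun x => ⟨⊤, by simp [hAT]⟩
    let g : Fin k → Fin m := fun x => (Finset.univ.filter (fun j => x ∈ A j)).min' (hne x)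
    have hg : ∀ x j, g x ≤ j ↔ x ∈ A j := by
      intro x j
      constructor
      · intro h
        have := Finset.min'_mem _ (hne x)
        simp only [Finset.mem_filter, Finset.mem_univ, true_and] at this
        exact hAm h this
      · intro h; exact Finset.min'_le _ _ (by simpa using h)
    have hgA : ∀ j, Finset.univ.filter (fun x => g x ≤ j) = A j := by
      intro j; ext x; simp [hg]
    have hfs : ∀ j, ∑ i ∈ Finset.Iic j, (Finset.univ.filter (fun x => g x = i)).card = ∑ i ∈ Finset.Iic j, σ i := by
      intro j
      rw [← hIic, hgA, ← hXr]; exact rank_card hs φ _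
    have hfib : ∀ j : Fin m, (Finset.univ.filter (fun x => g x = j)).card = σ j := by
      intro j
      induction j using WellFoundedLT.induction with
      | ind j ih =>
        have := hfs j
        rw [← Finset.Iio_insert, Finset.sum_insert (by simp), Finset.sum_insert (by simp),
          Finset.sum_congr rfl (fun i hi => ih i (Finset.mem_Iio.1 hi))] at this
        exact Nat.add_right_cancel this
    refine ⟨⟨g, hfib, ?_⟩, ?_⟩
    · rw [← hz, hgA]; simp only [A, hX0]
    · apply Subtype.ext
      funext j
      simp only [hgA, A, OrderIso.symm_apply_apply]

open Classical in
noncomputable def ff (rk : P → ℕ) (k : ℕ) (F : P) : ℕ := (Finset.univ.filter (fun T => rk T = k ∧ F ≤ T)).card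

theorem flagDeg_eq {rk : P → ℕ} (hs : IsSimplicial rk) {m : ℕ} [NeZero m] (σ : Fin m → ℕ) (hpos : ∀ i, 0 < σ i)
    (k : ℕ) (hsum : ∑ i, σ i = k) (F : P) (hF : rk F = σ 0) (A : Finset (Fin k)) (hA : A.card = σ 0) :
    flagDeg rk σ F = fcnt k σ A * ff rk k F := by
  classical
  have hst : ∀ T ∈ Finset.univ.filter (fun T => rk T = k ∧ F ≤ T),
     Nat.card {X : Fin m → P // (X 0 = F ∧ StrictMono X ∧ ∀ j : Fin m, rk (X j) = ∑ i ∈ Finset.Iic j, σ i) ∧ X ⊤ = T} = fcnt k σ A := by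
    intro T hT
    simp only [Finset.mem_filter, Finset.mem_univ, true_and] at hT
    have hn := hs T
    rw [hT.1] at hn
    obtain ⟨φ⟩ := hn
    rw [chain_count hs σ hpos k hsum T F hT.1 hT.2 φ]
    apply fcnt_symm
    rw [rank_card hs φ, hA, hF]
  unfold flagDeg ff
  rw [mul_comm, ← smul_eq_mul, ← Finset.sum_const, ← Finset.sum_congr rfl hst]
  simp only [Nat.card_eq_fintype_card, Fintype.card_subtype]
  rw [Finset.card_eq_sum_card_fiberwise (f := fun X : Fin m → P => X ⊤)
      (t := Finset.univ.filter (fun T => rk T = k ∧ F ≤ T))]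
  · simp only [Finset.filter_filter]
  · intro X hX
    simp only [Finset.coe_filter, Finset.mem_univ, true_and, Set.mem_ofPred_eq] at hX ⊢
    refine ⟨?_, hX.1 ▸ hX.2.1.monotone le_top⟩
    rw [hX.2.2, Finset.Iic_top, hsum]

open Classical in
theorem sum_ff {rk : P → ℕ} (hs : IsSimplicial rk) (k a : ℕ) :
    ∑ F ∈ Finset.univ.filter (fun F : P => rk F = a), ff rk k F =
      (Finset.univ.filter (fun T : P => rk T = k)).card * k.choose a := by
  have := Finset.sum_card_bipartiteAbove_eq_sum_card_bipartiteBelow (fun F T : P => F ≤ T)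
    (s := Finset.univ.filter (fun F : P => rk F = a)) (t := Finset.univ.filter (fun T : P => rk T = k))
  simp only [Finset.bipartiteAbove, Finset.bipartiteBelow, Finset.filter_filter] at this
  unfold ff
  rw [this, ← smul_eq_mul, ← Finset.sum_const]
  apply Finset.sum_congr rfl
  intro T hT
  rw [← (Finset.mem_filter.1 hT).2, ← count_below hs]
  congr 1; apply Finset.filter_congr; intro x _; exact and_comm

open Classical in
theorem lym {rk : P → ℕ} (hs : IsSimplicial rk) (k a b : ℕ) (hab : a ≤ b)
    (S : Finset P) (hS : ∀ G ∈ S, rk G = b) :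
    (∑ G ∈ S, ff rk k G) * b.choose a ≤
    (∑ F ∈ S.biUnion (fun G => Finset.univ.filter (fun F => F ≤ G ∧ rk F = a)), ff rk k F) * (k - a).choose (b - a) := by
  set N := S.biUnion (fun G => Finset.univ.filter (fun F => F ≤ G ∧ rk F = a)) with hN
  have hNa : ∀ F ∈ N, rk F = a := by
    intro F hF
    simp only [hN, Finset.mem_biUnion, Finset.mem_filter] at hF
    obtain ⟨_, _, h⟩ := hF; exact h.2.2
  let s : Finset (P × P) := S.sigma (fun G => Finset.univ.filter (fun T => rk T = k ∧ G ≤ T)) |>.map (Equiv.sigmaEquivProd P P).toEmbedding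
  let t : Finset (P × P) := N.sigma (fun F => Finset.univ.filter (fun T => rk T = k ∧ F ≤ T)) |>.map (Equiv.sigmaEquivProd P P).toEmbedding
  have hsc : s.card = ∑ G ∈ S, ff rk k G := by simp [s, ff]
  have htc : t.card = ∑ G ∈ N, ff rk k G := by simp [t, ff]
  have hsm : ∀ p, p ∈ s ↔ p.1 ∈ S ∧ rk p.2 = k ∧ p.1 ≤ p.2 := by
    rintro ⟨x, y⟩; simp [s, Finset.mem_map_equiv]
  have htm : ∀ p, p ∈ t ↔ p.1 ∈ N ∧ rk p.2 = k ∧ p.1 ≤ p.2 := by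
    rintro ⟨x, y⟩; simp [t, Finset.mem_map_equiv]
  rw [← hsc, ← htc]
  apply Finset.card_mul_le_card_mul (fun p q : P × P => q.1 ≤ p.1 ∧ q.2 = p.2)
  · rintro ⟨G, T⟩ hp
    rw [hsm] at hp
    dsimp only at hp
    rw [← hS G hp.1, ← count_below hs G a]
    apply Finset.card_le_card_of_injOn (fun F => (F, T))
    · intro F hF
      simp only [Finset.coe_filter, Finset.mem_univ, true_and, Set.mem_ofPred_eq] at hF
      simp only [Finset.bipartiteAbove, Finset.coe_filter, Set.mem_ofPred_eq, htm, hN, Finset.mem_biUnion, Finset.mem_filter, Finset.mem_univ, true_and, and_true]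
      exact ⟨⟨⟨G, hp.1, hF⟩, hp.2.1, hF.1.trans hp.2.2⟩, hF.1⟩
    · intro x _ y _ h; exact (Prod.mk.inj h).1
  · rintro ⟨F, T⟩ hq
    rw [htm] at hq
    dsimp only at hq
    have := count_between hs F T hq.2.2 b (by rw [hNa F hq.1]; exact hab)
    rw [hNa F hq.1, hq.2.1] at this
    rw [← this]
    apply Finset.card_le_card_of_injOn Prod.fst
    · rintro ⟨G, T'⟩ hG
      simp only [Finset.bipartiteBelow, Finset.coe_filter, Set.mem_ofPred_eq, hsm] at hG
      obtain ⟨⟨h1, h2, h3⟩, h4, h5⟩ := hG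
      subst h5
      simp only [Finset.coe_filter, Finset.mem_univ, true_and, Set.mem_ofPred_eq]
      exact ⟨hS G h1, h4, h3⟩
    · rintro ⟨x, y⟩ hx ⟨x', y'⟩ hx' h
      simp only [Finset.bipartiteBelow, Finset.coe_filter, Set.mem_ofPred_eq] at hx hx' h
      rw [Prod.mk.injEq]
      exact ⟨h, hx.2.2.symm.trans hx'.2.2⟩
end pos

/-- Let `P` be a finite pure simplicial poset of rank `k`, `σ = (σ_1, …, σ_m)` a
composition of `k`, and `π` a rearrangement of the parts of `σ`.  If `π_1 ≥ σ_1`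
then `d^σ(P) ⊵ d^π(P)`. -/
theorem face_to_flag_majorization
    {P : Type*} [Fintype P] [PartialOrder P] [OrderBot P]
    (rk : P → ℕ) (hsimp : IsSimplicial rk)
    (k : ℕ) (hpure : ∀ x : P, IsMax x → rk x = k)
    {m : ℕ} [NeZero m] (σ π : Fin m → ℕ)
    (hpos : ∀ i, 0 < σ i) (hsum : ∑ i, σ i = k)
    (e : Equiv.Perm (Fin m)) (hπ : π = σ ∘ e)
    (h1 : σ 0 ≤ π 0) :
    Majorizes (degSeq rk σ) (degSeq rk π) := by
  classical
  have hposπ : ∀ i, 0 < π i := fun i => by rw [hπ]; exact hpos _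
  have hsumπ : ∑ i, π i = k := by
    rw [hπ, ← hsum]; exact Equiv.sum_comp e σ
  have hak : σ 0 ≤ k := hsum ▸ Finset.single_le_sum (fun _ _ => Nat.zero_le _) (Finset.mem_univ 0)
  have hbk : π 0 ≤ k := hsumπ ▸ Finset.single_le_sum (fun _ _ => Nat.zero_le _) (Finset.mem_univ 0)
  obtain ⟨A, -, hA⟩ := Finset.exists_subset_card_eq (s := (Finset.univ : Finset (Fin k))) (n := σ 0) (by simpa using hak)
  obtain ⟨B, -, hB⟩ := Finset.exists_subset_card_eq (s := (Finset.univ : Finset (Fin k))) (n := π 0) (by simpa using hbk)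
  have hdσ := fun F hF => flagDeg_eq hsimp σ hpos k hsum F hF A hA
  have hdπ := fun F hF => flagDeg_eq hsimp π hposπ k hsumπ F hF B hB
  have hc1 := fcnt_mul k σ A hA
  have hc2 := fcnt_mul k π B hB
  have hc : fcnt k σ A * k.choose (σ 0) = fcnt k π B * k.choose (π 0) := by
    rw [hc1, hc2, hπ, ftot_perm]
  generalize fcnt k σ A = c at *
  generalize fcnt k π B = d at *
  have hch := Nat.choose_mul (n := k) h1
  have hca : 0 < k.choose (σ 0) := Nat.choose_pos hak
  have hcb : 0 < (π 0).choose (σ 0) := Nat.choose_pos h1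
  have hcd : d * (k - σ 0).choose (π 0 - σ 0) = c * (π 0).choose (σ 0) := by
    apply Nat.eq_of_mul_eq_mul_left hca
    calc _ = d * (k.choose (σ 0) * (k - σ 0).choose (π 0 - σ 0)) := by ring
      _ = (d * k.choose (π 0)) * (π 0).choose (σ 0) := by rw [← hch]; ring
      _ = _ := by rw [← hc]; ring
  have hdc : d ≤ c := by
    by_cases he : e 0 = 0
    · have : π 0 = σ 0 := by rw [hπ, Function.comp_apply, he]
      rw [this] at hc
      exact (Nat.eq_of_mul_eq_mul_right hca hc).ge
    · have hle : σ 0 + π 0 ≤ k := by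
        rw [← hsum, hπ, Function.comp_apply, ← Finset.sum_pair (Ne.symm he)]
        exact Finset.sum_le_sum_of_subset (Finset.subset_univ _)
      have h2 : (π 0).choose (σ 0) ≤ (k - σ 0).choose (π 0 - σ 0) := by
        rw [← Nat.choose_symm h1]
        exact Nat.choose_le_choose _ (by omega)
      apply Nat.le_of_mul_le_mul_right _ hcb
      rw [← hcd]
      exact Nat.mul_le_mul_left _ h2
  have hsumeq : ∀ (τ : Fin m → ℕ), (degSeq rk τ).sum = ∑ F ∈ Finset.univ.filter (fun F : P => rk F = τ 0), flagDeg rk τ F := by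
    intro τ; unfold degSeq; rw [Finset.sum]
  constructor
  · rw [hsumeq, hsumeq, Finset.sum_congr rfl (fun F hF => hdσ F (Finset.mem_filter.1 hF).2),
      Finset.sum_congr rfl (fun F hF => hdπ F (Finset.mem_filter.1 hF).2),
      ← Finset.mul_sum, ← Finset.mul_sum, sum_ff hsimp, sum_ff hsimp, mul_left_comm, hc]
    ring
  · intro r
    obtain ⟨S, hS, hSr, hSe⟩ := exists_of_take (Finset.univ.filter (fun F : P => rk F = π 0)) (flagDeg rk π) r
    have hSb : ∀ G ∈ S, rk G = π 0 := fun G hG => (Finset.mem_filter.1 (hS hG)).2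
    obtain ⟨S', hS', hc', hle⟩ := match_lemma S (fun G => Finset.univ.filter (fun F => F ≤ G ∧ rk F = σ 0))
      (fun F => c * ff rk k F) (fun G => d * ff rk k G)
      (by
        intro G _ F hF
        apply Nat.mul_le_mul hdc
        apply Finset.card_le_card
        intro T hT
        simp only [Finset.mem_filter, Finset.mem_univ, true_and] at hT hF ⊢
        exact ⟨hT.1, hF.1.trans hT.2⟩)
      (by
        intro S1 hS1
        have := lym hsimp k (σ 0) (π 0) h1 S1 (fun G hG => hSb G (hS1 hG))
        rw [← Finset.mul_sum, ← Finset.mul_sum]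
        apply Nat.le_of_mul_le_mul_right _ hcb
        calc _ = d * ((∑ G ∈ S1, ff rk k G) * (π 0).choose (σ 0)) := by ring
          _ ≤ _ := Nat.mul_le_mul_left d this
          _ = (d * (k - σ 0).choose (π 0 - σ 0)) * _ := by rw [mul_comm (∑ _ ∈ _, _), ← mul_assoc]
          _ = _ := by rw [hcd]; ring)
    have hS'a : ∀ F ∈ S', rk F = σ 0 := by
      intro F hF
      have := hS' hF
      simp only [Finset.mem_biUnion, Finset.mem_filter] at this
      obtain ⟨_, _, h⟩ := this; exact h.2.2
    have hfin := take_sort_ge (Finset.univ.filter (fun F : P => rk F = σ 0)) S' (flagDeg rk σ)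
      (fun F hF => by simpa using hS'a F hF) r (hc'.trans hSr)
    rw [Finset.sum_congr rfl (fun F hF => hdσ F (hS'a F hF))] at hfin
    rw [Finset.sum_congr rfl (fun F hF => hdπ F (hSb F hF))] at hSe
    have key := hSe.le.trans (hle.trans hfin)
    unfold degSeq
    convert key
end

section
/- Let P be a finite pure simplicial poset of rank k, let σ = (σ_1, …, σ_m) be a composition of k, and let π = (π_1, …, π_m) be a rearrangement of the parts of σ with π_1 > σ_1. If F is an element of P of rank σ_1 and G is an element of rank π_1 with F < G, then d^σ(F) ≥ d^π(G). -/
open Classical in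
/-- maps with prescribed fibre sizes and prescribed zeroth fibre -/
noncomputable def fibA {α : Type*} [Fintype α] {m : ℕ} [NeZero m] (σ : Fin m → ℕ) (A : Finset α) :
    Finset (α → Fin m) :=
  Finset.univ.filter fun f => (∀ j, (Finset.univ.filter fun i => f i = j).card = σ j) ∧
    (Finset.univ.filter fun i => f i = 0) = A

open Classical in
/-- maps with prescribed fibre sizes -/
noncomputable def fibT (α : Type*) [Fintype α] {m : ℕ} (σ : Fin m → ℕ) :
    Finset (α → Fin m) :=
  Finset.univ.filter fun f => (∀ j, (Finset.univ.filter fun i => f i = j).card = σ j)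

open Classical in
theorem fibA_card_le {α : Type*} [Fintype α] {m : ℕ} [NeZero m] (σ : Fin m → ℕ) (A B : Finset α)
    (h : A.card = B.card) : (fibA σ A).card ≤ (fibA σ B).card := by
  obtain ⟨g, hg⟩ : ∃ g : Equiv.Perm α, ∀ x, g x ∈ A ↔ x ∈ B := by
    let e0 : {x // x ∈ B} ≃ {x // x ∈ A} := Fintype.equivOfCardEq (by simp [h])
    refine ⟨e0.extendSubtype, fun x => ?_⟩
    by_cases hx : x ∈ B
    · simp only [hx, iff_true]; exact e0.extendSubtype_mem x hx
    · simp only [hx, iff_false]; exact e0.extendSubtype_not_mem x hx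
  refine Finset.card_le_card_of_injOn (fun f => f ∘ g) ?_ ?_
  · intro f hf
    simp only [fibA, Finset.coe_filter, Finset.mem_univ, true_and, Set.mem_ofPred_eq] at hf ⊢
    refine ⟨fun j => ?_, ?_⟩
    · rw [← hf.1 j]
      refine Finset.card_bij (fun i _ => g i) ?_ ?_ ?_
      · intro a ha; simpa using ha
      · intro a _ b _ hab; exact g.injective hab
      · intro b hb; exact ⟨g.symm b, by simpa using hb, by simp⟩
    · ext x
      rw [← hg x, ← hf.2]
      simp
  · intro f _ f' _ hff
    funext x
    have := congrFun hff (g.symm x)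
    simpa using this

open Classical in
theorem fibA_mul {α : Type*} [Fintype α] {m : ℕ} [NeZero m] (σ : Fin m → ℕ) (A : Finset α)
    (h : A.card = σ 0) :
    (fibT α σ).card = (Fintype.card α).choose (σ 0) * (fibA σ A).card := by
  have h1 := Finset.card_eq_sum_card_fiberwise (s := fibT α σ)
    (t := Finset.powersetCard (σ 0) (Finset.univ : Finset α))
    (f := fun f => Finset.univ.filter fun i => f i = 0) (by
      intro f hf
      simp only [fibT, Finset.coe_filter, Finset.mem_univ, true_and, Set.mem_ofPred_eq] at hf
      simp [Finset.mem_powersetCard, hf 0])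
  rw [h1, Finset.sum_const_nat (m := (fibA σ A).card)]
  · simp
  · intro B hB
    have hB' := (Finset.mem_powersetCard.1 hB).2
    have : (fibT α σ).filter (fun f => (Finset.univ.filter fun i => f i = 0) = B) = fibA σ B := by
      ext f; simp [fibT, fibA]
    rw [this]
    exact le_antisymm (fibA_card_le _ _ _ (by omega)) (fibA_card_le _ _ _ (by omega))

open Classical in
theorem fibT_perm (α : Type*) [Fintype α] {m : ℕ} (σ : Fin m → ℕ) (e : Equiv.Perm (Fin m)) :
    (fibT α (σ ∘ e)).card ≤ (fibT α σ).card := by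
  refine Finset.card_le_card_of_injOn (fun f => e ∘ f) ?_ ?_
  · intro f hf
    simp only [fibT, Finset.coe_filter, Finset.mem_univ, true_and, Set.mem_ofPred_eq] at hf ⊢
    intro j
    have := hf (e.symm j)
    simp only [Function.comp, Equiv.apply_symm_apply] at this
    rw [← this]
    congr 1
    ext i
    simp [Equiv.eq_symm_apply]
  · intro f _ f' _ hff
    funext x
    exact e.injective (congrFun hff x)

theorem choose_le_aux (k a b : ℕ) (h : a ≤ b) (hk : a + b ≤ k) : k.choose a ≤ k.choose b := by
  by_cases hb : b ≤ k / 2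
  · have : ∀ b, a ≤ b → b ≤ k/2 → k.choose a ≤ k.choose b := by
      intro b hab
      induction b, hab using Nat.le_induction with
      | base => intro _; exact le_rfl
      | succ n hn ih =>
        intro hh
        exact (ih (by omega)).trans (Nat.choose_le_succ_of_lt_half_left (by omega))
    exact this b h hb
  · rw [← Nat.choose_symm (n := k) (k := b) (by omega)]
    have : ∀ b, a ≤ b → b ≤ k/2 → k.choose a ≤ k.choose b := by
      intro b hab
      induction b, hab using Nat.le_induction with
      | base => intro _; exact le_rfl
      | succ n hn ih =>
        intro hh
        exact (ih (by omega)).trans (Nat.choose_le_succ_of_lt_half_left (by omega))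
    exact this (k - b) (by omega) (by omega)

theorem fibA_compare {α : Type*} [Fintype α] {m : ℕ} [NeZero m] (σ : Fin m → ℕ)
    (e : Equiv.Perm (Fin m)) (A B : Finset α) (hA : A.card = σ 0) (hB : B.card = σ (e 0))
    (hlt : σ 0 < σ (e 0)) (hs : ∑ i, σ i = Fintype.card α) :
    (fibA (σ ∘ e) B).card ≤ (fibA σ A).card := by
  have h1 := fibA_mul σ A hA
  have h2 := fibA_mul (σ ∘ e) B hB
  have h3 := fibT_perm α σ e
  rw [h1, h2] at h3
  have hne : e 0 ≠ 0 := by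
    intro h; rw [h] at hlt; exact lt_irrefl _ hlt
  have hsum : σ 0 + σ (e 0) ≤ Fintype.card α := by
    rw [← hs, ← Finset.sum_pair (f := σ) hne.symm]
    exact Finset.sum_le_sum_of_subset (Finset.subset_univ _)
  have hc := choose_le_aux _ _ _ hlt.le hsum
  have hp : 0 < (Fintype.card α).choose (σ 0) := Nat.choose_pos (by omega)
  refine Nat.le_of_mul_le_mul_left ?_ hp
  exact (Nat.mul_le_mul_right _ hc).trans h3

theorem card_simp {P : Type*} [PartialOrder P] [OrderBot P] (rk : P → ℕ)
    (hsimp : IsSimplicial rk) (X : P) (φ : Set.Icc (⊥ : P) X ≃o Finset (Fin (rk X)))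
    (y : Set.Icc (⊥ : P) X) : (φ y).card = rk y.1 := by
  obtain ⟨ψ⟩ := hsimp y.1
  have h1 : Nat.card (Set.Icc (⊥ : P) y.1) = 2 ^ rk y.1 := by
    rw [Nat.card_congr ψ.toEquiv]; simp
  have h2 : Nat.card (Set.Icc (⊥ : P) y.1) = Nat.card {s // s ∈ (φ y).powerset} := by
    refine Nat.card_congr ⟨fun z => ⟨φ ⟨z.1, bot_le, z.2.2.trans y.2.2⟩, ?_⟩,
      fun s => ⟨(φ.symm s.1).1, bot_le, ?_⟩, ?_, ?_⟩
    · rw [Finset.mem_powerset]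
      exact φ.monotone z.2.2
    · have := s.2
      rw [Finset.mem_powerset] at this
      have h : φ.symm s.1 ≤ y := by rw [φ.symm_apply_le]; exact this
      exact h
    · intro z; simp
    · intro s; exact Subtype.ext (φ.apply_symm_apply s.1)
  rw [h1] at h2
  simp only [Nat.card_eq_fintype_card, Fintype.card_coe, Finset.card_powerset] at h2
  exact (Nat.pow_right_injective le_rfl h2).symm

open Classical in
/-- flags ending in X -/
noncomputable def chn {P : Type*} [Fintype P] [PartialOrder P] (rk : P → ℕ) {m : ℕ} [NeZero m]
    (σ : Fin m → ℕ) (F : P) (l : Fin m) (X : P) : Finset (Fin m → P) :=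
  Finset.univ.filter fun Y => (Y 0 = F ∧ StrictMono Y ∧
    ∀ j : Fin m, rk (Y j) = ∑ i ∈ Finset.Iic j, σ i) ∧ Y l = X

open Classical in
theorem flagDeg_sum {P : Type*} [Fintype P] [PartialOrder P] (rk : P → ℕ) {m : ℕ} [NeZero m]
    (σ : Fin m → ℕ) (F : P) (l : Fin m) :
    flagDeg rk σ F = ∑ X : P, (chn rk σ F l X).card := by
  unfold flagDeg
  rw [Nat.card_eq_fintype_card, Fintype.card_subtype,
    Finset.card_eq_sum_card_fiberwise (t := Finset.univ) (f := fun Y => Y l) (by simp)]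
  refine Finset.sum_congr rfl fun X _ => ?_
  congr 1
  ext Y; simp [chn]

theorem sum_Iic_inj {m : ℕ} (a b : Fin m → ℕ)
    (h : ∀ j, ∑ i ∈ Finset.Iic j, a i = ∑ i ∈ Finset.Iic j, b i) : ∀ j, a j = b j := by
  intro j
  induction j using WellFoundedLT.induction with
  | ind j ih =>
    have := h j
    have h2 : ∑ i ∈ Finset.Iio j, a i = ∑ i ∈ Finset.Iio j, b i :=
      Finset.sum_congr rfl (fun i hi => ih i (Finset.mem_Iio.1 hi))
    rw [← Finset.Iio_insert, Finset.sum_insert (by simp), Finset.sum_insert (by simp), h2] at this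
    omega

open Classical in
theorem card_le_eq_sum {α : Type*} [Fintype α] {m : ℕ} (f : α → Fin m) (j : Fin m) :
    (Finset.univ.filter fun i => f i ≤ j).card =
      ∑ t ∈ Finset.Iic j, (Finset.univ.filter fun i => f i = t).card := by
  rw [Finset.card_eq_sum_card_fiberwise (t := Finset.Iic j) (f := f) (by intro x; simp)]
  refine Finset.sum_congr rfl fun t ht => ?_
  congr 1
  ext x
  simp only [Finset.mem_filter, Finset.mem_univ, true_and, and_iff_right_iff_imp]
  rintro rfl
  exact Finset.mem_Iic.1 ht

open Classical in
theorem chn_le {P : Type*} [Fintype P] [PartialOrder P] [OrderBot P] (rk : P → ℕ)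
    (hsimp : IsSimplicial rk) {m : ℕ} [NeZero m]
    (σ : Fin m → ℕ) (F : P) (l : Fin m) (hl : ∀ j, j ≤ l) (X : P) (hs : ∑ i, σ i = rk X)
    (φ : Set.Icc (⊥ : P) X ≃o Finset (Fin (rk X))) (hFX : F ≤ X) :
    (chn rk σ F l X).card ≤ (fibA σ (φ ⟨F, bot_le, hFX⟩)).card := by
  have key : ∀ Y ∈ chn rk σ F l X, ∃ f ∈ fibA σ (φ ⟨F, bot_le, hFX⟩),
      ∀ j, ∃ h : Y j ≤ X, φ ⟨Y j, bot_le, h⟩ = Finset.univ.filter fun i => f i ≤ j := by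
    intro Y hY
    simp only [chn, Finset.mem_filter, Finset.mem_univ, true_and] at hY
    obtain ⟨⟨h0, hm, hr⟩, hX⟩ := hY
    have hle : ∀ j, Y j ≤ X := fun j => hX ▸ hm.monotone (hl j)
    let S : Fin m → Finset (Fin (rk X)) := fun j => φ ⟨Y j, bot_le, hle j⟩
    have hS : Monotone S := fun a b hab => φ.monotone (hm.monotone hab : Y a ≤ Y b)
    have hSc : ∀ j, (S j).card = ∑ i ∈ Finset.Iic j, σ i := fun j => by
      rw [← hr j]; exact card_simp rk hsimp X φ _
    have hSl : S l = Finset.univ := by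
      rw [← Finset.card_eq_iff_eq_univ, hSc, Fintype.card_fin, ← hs]
      congr 1; ext i; simp [hl i]
    have hex : ∀ i, ∃ j : Fin m, i ∈ S j ∧ ∀ j', i ∈ S j' → j ≤ j' := by
      intro i
      have hne : (Finset.univ.filter fun j => i ∈ S j).Nonempty := ⟨l, by simp [hSl]⟩
      refine ⟨Finset.min' _ hne, ?_, ?_⟩
      · have := Finset.min'_mem _ hne
        exact (Finset.mem_filter.1 this).2
      · intro j' hj'
        exact Finset.min'_le _ _ (by simp [hj'])
    choose f hf1 hf2 using hex
    have hSf : ∀ j, S j = Finset.univ.filter fun i => f i ≤ j := by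
      intro j; ext i
      simp only [Finset.mem_filter, Finset.mem_univ, true_and]
      exact ⟨hf2 i j, fun h => hS h (hf1 i)⟩
    refine ⟨f, ?_, fun j => ⟨hle j, hSf j⟩⟩
    simp only [fibA, Finset.mem_filter, Finset.mem_univ, true_and]
    constructor
    · apply sum_Iic_inj
      intro j
      rw [← card_le_eq_sum, ← hSf, hSc]
    · have : S 0 = φ ⟨F, bot_le, hFX⟩ := by
        simp only [S, h0]
      rw [← this, hSf]
      ext i; simp
  choose! g hg1 hg2 using key
  refine Finset.card_le_card_of_injOn g hg1 ?_
  intro Y hY Z hZ hYZ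
  funext j
  obtain ⟨h1, e1⟩ := hg2 Y hY j
  obtain ⟨h2, e2⟩ := hg2 Z hZ j
  rw [hYZ, ← e2] at e1
  exact congrArg Subtype.val (φ.injective e1)

open Classical in
theorem le_chn {P : Type*} [Fintype P] [PartialOrder P] [OrderBot P] (rk : P → ℕ)
    (hsimp : IsSimplicial rk) {m : ℕ} [NeZero m]
    (σ : Fin m → ℕ) (hpos : ∀ i, 0 < σ i) (F : P) (l : Fin m) (hl : ∀ j, j ≤ l) (X : P)
    (φ : Set.Icc (⊥ : P) X ≃o Finset (Fin (rk X))) (hFX : F ≤ X) :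
    (fibA σ (φ ⟨F, bot_le, hFX⟩)).card ≤ (chn rk σ F l X).card := by
  refine Finset.card_le_card_of_injOn
    (fun f j => (φ.symm (Finset.univ.filter fun i => f i ≤ j)).1) ?_ ?_
  · intro f hf
    simp only [fibA, Finset.coe_filter, Finset.mem_univ, true_and, Set.mem_ofPred_eq] at hf
    simp only [chn, Finset.coe_filter, Finset.mem_univ, true_and, Set.mem_ofPred_eq]
    obtain ⟨hc, h0⟩ := hf
    refine ⟨⟨?_, ?_, ?_⟩, ?_⟩
    · have : (Finset.univ.filter fun i => f i ≤ 0) = φ ⟨F, bot_le, hFX⟩ := by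
        rw [← h0]; ext i; simp
      rw [this]; simp
    · intro a b hab
      have : φ.symm (Finset.univ.filter fun i => f i ≤ a) <
          φ.symm (Finset.univ.filter fun i => f i ≤ b) := by
        rw [φ.symm.lt_iff_lt, Finset.ssubset_iff_of_subset]
        · have hb : 0 < (Finset.univ.filter fun i => f i = b).card := by rw [hc]; exact hpos b
          obtain ⟨x, hx⟩ := Finset.card_pos.1 hb
          have hx' : f x = b := by simpa using hx
          exact ⟨x, by simp [hx'], by simp [hx', hab]⟩
        · intro x hx
          simp only [Finset.mem_filter, Finset.mem_univ, true_and] at hx ⊢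
          exact hx.trans hab.le
      exact this
    · intro j
      rw [← card_simp rk hsimp X φ, OrderIso.apply_symm_apply, card_le_eq_sum]
      exact Finset.sum_congr rfl fun i _ => hc i
    · have : (Finset.univ.filter fun i => f i ≤ l) = φ ⟨X, bot_le, le_rfl⟩ := by
        have h1 : (Finset.univ.filter fun i => f i ≤ l) = ⊤ := by ext i; simp [hl]
        rw [h1]
        refine (top_le_iff.1 ?_).symm
        rw [← φ.symm_apply_le]
        exact (φ.symm ⊤).2.2
      rw [this]; simp
  · intro f _ f' _ h
    have h' : ∀ j i, f i ≤ j ↔ f' i ≤ j := by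
      intro j i
      have := φ.symm.injective (Subtype.ext (congrFun h j))
      simpa using Finset.ext_iff.1 this i
    funext i
    exact le_antisymm ((h' _ i).2 le_rfl) ((h' _ i).1 le_rfl)

/-- Let `P` be a finite pure simplicial poset of rank `k`, `σ` a composition of `k`
and `π` a rearrangement of the parts of `σ` with `π_1 > σ_1`.  If `F` has rank `σ_1`,
`G` has rank `π_1` and `F < G`, then `d^σ(F) ≥ d^π(G)`. -/
theorem flagDeg_le_of_lt
    {P : Type*} [Fintype P] [PartialOrder P] [OrderBot P]
    (rk : P → ℕ) (hsimp : IsSimplicial rk)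
    (k : ℕ) (hpure : ∀ x : P, IsMax x → rk x = k)
    {m : ℕ} [NeZero m] (σ π : Fin m → ℕ)
    (hpos : ∀ i, 0 < σ i) (hsum : ∑ i, σ i = k)
    (e : Equiv.Perm (Fin m)) (hπ : π = σ ∘ e)
    (h1 : σ 0 < π 0)
    (F G : P) (hF : rk F = σ 0) (hG : rk G = π 0) (hFG : F < G) :
    flagDeg rk π G ≤ flagDeg rk σ F := by
  classical
  subst hπ
  obtain ⟨l, hl⟩ : ∃ l : Fin m, ∀ j, j ≤ l :=
    ⟨Fin.rev 0, fun j => by rw [Fin.le_rev_iff]; exact Fin.zero_le _⟩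
  rw [flagDeg_sum rk _ G l, flagDeg_sum rk _ F l]
  refine Finset.sum_le_sum fun X _ => ?_
  rcases Finset.eq_empty_or_nonempty (chn rk (σ ∘ e) G l X) with h | ⟨Y, hY⟩
  · simp [h]
  · simp only [chn, Finset.mem_filter, Finset.mem_univ, true_and] at hY
    obtain ⟨⟨h0, hm, hr⟩, hX⟩ := hY
    have hGX : G ≤ X := by rw [← h0, ← hX]; exact hm.monotone (hl 0)
    have hFX : F ≤ X := hFG.le.trans hGX
    have hu : (Finset.Iic l) = Finset.univ := by ext i; simp [hl i]
    have hs' : ∑ i, (σ ∘ e) i = rk X := by rw [← hX, hr l, hu]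
    have hs : ∑ i, σ i = rk X := by rw [← hs']; exact (Equiv.sum_comp e σ).symm
    obtain ⟨φ⟩ := hsimp X
    refine (chn_le rk hsimp (σ ∘ e) G l hl X hs' φ hGX).trans
      (le_trans ?_ (le_chn rk hsimp σ hpos F l hl X φ hFX))
    refine fibA_compare σ e _ _ ?_ ?_ h1 (by simpa using hs)
    · rw [card_simp rk hsimp X φ]; exact hF
    · rw [card_simp rk hsimp X φ]; exact hG
end

section
/- Let P be a finite pure simplicial poset of rank k, let σ = (σ_1, …, σ_m) be a composition of k, and let π be any rearrangement of the parts of σ. Then the sum of d^σ(F) over all rank-σ_1 elements F equals the sum of d^π(G) over all rank-π_1 elements G. -/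
theorem aux_sum_fiber {A B : Type*} [Fintype B] [Finite A] (g : A → B) (p : A → Prop) :
    ∑ b : B, Nat.card {x : A // g x = b ∧ p x} = Nat.card {x : A // p x} := by
  rw [← Nat.card_sigma]
  exact Nat.card_congr
    { toFun := fun y => ⟨y.2.1, y.2.2.2⟩
      invFun := fun x => ⟨g x.1, x.1, rfl, x.2⟩
      left_inv := by rintro ⟨b, x, rfl, h⟩; rfl
      right_inv := fun x => rfl }

theorem aux_rk {P : Type*} [PartialOrder P] [OrderBot P]
    (rk : P → ℕ) (hsimp : IsSimplicial rk) (T : P)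
    (φ : Set.Icc (⊥ : P) T ≃o Finset (Fin (rk T))) (y : Set.Icc (⊥ : P) T) :
    (φ y).card = rk y.1 := by
  obtain ⟨ψ⟩ := hsimp y.1
  have h1 : Nat.card (Set.Icc (⊥ : P) y.1) = 2 ^ rk y.1 := by
    rw [Nat.card_congr ψ.toEquiv]; simp
  have h2 : Nat.card (Set.Icc (⊥ : P) y.1) = 2 ^ (φ y).card := by
    have e : Set.Icc (⊥ : P) y.1 ≃ {s : Finset (Fin (rk T)) // s ∈ (φ y).powerset} :=
      { toFun := fun z => ⟨φ ⟨z.1, bot_le, z.2.2.trans y.2.2⟩, by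
          rw [Finset.mem_powerset]
          exact φ.monotone (a := ⟨z.1, bot_le, z.2.2.trans y.2.2⟩) (b := y) z.2.2⟩
        invFun := fun s => ⟨(φ.symm s.1).1, bot_le, by
          have h : φ.symm s.1 ≤ y := by
            rw [φ.symm_apply_le]; exact Finset.mem_powerset.1 s.2
          exact h⟩
        left_inv := fun z => by simp
        right_inv := fun s => Subtype.ext (φ.apply_symm_apply s.1) }
    rw [Nat.card_congr e, ← Finset.card_powerset, Nat.card_eq_fintype_card, Fintype.card_coe]
  exact Nat.pow_right_injective le_rfl (h2.symm.trans h1)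

theorem aux_fib {m n : ℕ} (f : Fin n → Fin m) (j : Fin m) :
    (Finset.univ.filter (fun a => f a ≤ j)).card =
      ∑ i ∈ Finset.Iic j, (Finset.univ.filter (fun a => f a = i)).card := by
  rw [Finset.card_eq_sum_card_fiberwise (f := f) (t := Finset.Iic j)]
  · refine Finset.sum_congr rfl fun i hi => ?_
    congr 1
    ext a
    simp only [Finset.mem_Iic] at hi
    simp only [Finset.mem_filter, Finset.mem_univ, true_and]
    constructor
    · exact fun h => h.2
    · rintro rfl; exact ⟨hi, rfl⟩
  · intro a ha; simpa using ha

theorem aux_psum {m : ℕ} (u v : Fin m → ℕ)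
    (h : ∀ j, ∑ i ∈ Finset.Iic j, u i = ∑ i ∈ Finset.Iic j, v i) (j : Fin m) : u j = v j := by
  induction j using WellFoundedLT.induction with
  | _ j ih =>
    have h1 := h j
    rw [← Finset.Iio_insert, Finset.sum_insert (by simp), Finset.sum_insert (by simp),
      Finset.sum_congr rfl fun i hi => ih i (Finset.mem_Iio.1 hi)] at h1
    exact Nat.add_right_cancel h1

theorem aux_main {P : Type*} [PartialOrder P] [OrderBot P]
    (rk : P → ℕ) (hsimp : IsSimplicial rk) {m : ℕ} (σ : Fin m → ℕ)
    (hpos : ∀ i, 0 < σ i) (t : Fin m) (ht : ∀ i, i ≤ t) (T : P) (hT : rk T = ∑ i, σ i) :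
    Nat.card {X : Fin m → P // X t = T ∧ StrictMono X ∧
      ∀ j : Fin m, rk (X j) = ∑ i ∈ Finset.Iic j, σ i} =
    Nat.card {f : Fin (rk T) → Fin m //
      ∀ i, (Finset.univ.filter (fun a => f a = i)).card = σ i} := by
  obtain ⟨φ⟩ := hsimp T
  symm
  have hφs : ∀ s : Finset (Fin (rk T)), rk (φ.symm s).1 = s.card := by
    intro s
    rw [← aux_rk rk hsimp T φ, OrderIso.apply_symm_apply]
  refine Nat.card_congr (Equiv.ofBijective (fun f => ⟨fun j => (φ.symm
    (Finset.univ.filter (fun a => f.1 a ≤ j))).1, ?_, ?_, ?_⟩) ⟨?_, ?_⟩)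
  · have : (Finset.univ.filter (fun a => f.1 a ≤ t)) = ⊤ := by
      ext a; simp [ht]
    simp only [this]
    have h : φ.symm ⊤ = ⟨T, bot_le, le_rfl⟩ := by
      rw [OrderIso.symm_apply_eq]
      refine le_antisymm ?_ le_top
      rw [← φ.symm_apply_le]
      exact (φ.symm ⊤).2.2
    rw [h]
  · intro i j hij
    have : φ.symm (Finset.univ.filter (fun a => f.1 a ≤ i)) <
        φ.symm (Finset.univ.filter (fun a => f.1 a ≤ j)) := by
      rw [OrderIso.lt_iff_lt]
      have hne : (Finset.univ.filter (fun a => f.1 a = j)).Nonempty := by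
        rw [← Finset.card_pos, f.2]; exact hpos j
      obtain ⟨a, ha⟩ := hne
      simp only [Finset.mem_filter, Finset.mem_univ, true_and] at ha
      refine Finset.ssubset_iff_of_subset ?_ |>.2 ⟨a, ?_, ?_⟩
      · intro b; simp only [Finset.mem_filter, Finset.mem_univ, true_and]
        exact fun h => h.trans hij.le
      · simp [ha]
      · simp [ha, hij]
    exact this
  · intro j
    simp only
    rw [hφs, aux_fib]
    exact Finset.sum_congr rfl fun i _ => f.2 i
  · rintro ⟨f, hf⟩ ⟨g, hg⟩ h
    simp only [Subtype.mk.injEq] at h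
    have h' : ∀ a j, f a ≤ j ↔ g a ≤ j := by
      intro a j
      have h1 := congrFun h j
      have h2 := φ.symm.injective (Subtype.ext h1)
      have h3 := Finset.ext_iff.1 h2 a
      simpa using h3
    ext1
    funext a
    exact le_antisymm ((h' a _).2 le_rfl) ((h' a _).1 le_rfl)
  · rintro ⟨X, hXt, hX, hr⟩
    have hXT : ∀ j, X j ≤ T := fun j => hXt ▸ hX.monotone (ht j)
    let S : Fin m → Finset (Fin (rk T)) := fun j => φ ⟨X j, bot_le, hXT j⟩
    have hS : Monotone S := fun i j hij => φ.monotone (hX.monotone hij)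
    have hSc : ∀ j, (S j).card = ∑ i ∈ Finset.Iic j, σ i := by
      intro j; rw [← hr j]; exact aux_rk rk hsimp T φ _
    have hSt : S t = Finset.univ := by
      rw [← Finset.card_eq_iff_eq_univ, hSc, Fintype.card_fin, hT]
      congr 1; ext i; simp [ht]
    have hex : ∀ a, ∃ j, a ∈ S j ∧ ∀ i, a ∈ S i → j ≤ i := by
      intro a
      obtain ⟨j, hj, hm⟩ := WellFounded.has_min (wellFounded_lt (α := Fin m))
        {j | a ∈ S j} ⟨t, by simp [hSt]⟩
      exact ⟨j, hj, fun i hi => not_lt.1 (hm i hi)⟩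
    choose f hf1 hf2 using hex
    have hfS : ∀ j, Finset.univ.filter (fun a => f a ≤ j) = S j := by
      intro j; ext a
      simp only [Finset.mem_filter, Finset.mem_univ, true_and]
      exact ⟨fun h => hS h (hf1 a), hf2 a j⟩
    refine ⟨⟨f, aux_psum _ _ fun j => ?_⟩, ?_⟩
    · rw [← aux_fib, hfS, hSc]
    · ext1
      funext j
      simp only [hfS, S, OrderIso.symm_apply_apply]

theorem aux_total {P : Type*} [Fintype P] [PartialOrder P] [OrderBot P]
    (rk : P → ℕ) {m : ℕ} [NeZero m] (σ : Fin m → ℕ) :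
    ∑ F ∈ Finset.univ.filter (fun F : P => rk F = σ 0), flagDeg rk σ F =
      Nat.card {X : Fin m → P // StrictMono X ∧
        ∀ j : Fin m, rk (X j) = ∑ i ∈ Finset.Iic j, σ i} := by
  rw [← aux_sum_fiber (fun X : Fin m → P => X 0), Finset.sum_filter]
  refine Finset.sum_congr rfl fun F _ => ?_
  split_ifs with h
  · rfl
  · symm
    rw [Nat.card_eq_zero]
    left
    refine ⟨?_⟩
    rintro ⟨X, rfl, -, hr⟩
    apply h
    rw [hr 0]
    have : Finset.Iic (0 : Fin m) = {0} := by
      ext i; simp only [Finset.mem_Iic, Finset.mem_singleton, Fin.ext_iff, Fin.le_def, Fin.val_zero, Fin.coe_ofNat_eq_mod, Nat.zero_mod, Nat.le_zero]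
    simp [this]

theorem aux_total2 {P : Type*} [Fintype P] [PartialOrder P] [OrderBot P]
    (rk : P → ℕ) (hsimp : IsSimplicial rk) {m : ℕ} [NeZero m] (σ : Fin m → ℕ)
    (hpos : ∀ i, 0 < σ i) :
    ∑ F ∈ Finset.univ.filter (fun F : P => rk F = σ 0), flagDeg rk σ F =
      ∑ T ∈ Finset.univ.filter (fun T : P => rk T = ∑ i, σ i),
        Nat.card {f : Fin (rk T) → Fin m //
          ∀ i, (Finset.univ.filter (fun a => f a = i)).card = σ i} := by
  obtain ⟨t, ht⟩ : ∃ t : Fin m, ∀ i, i ≤ t :=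
    ⟨⟨m - 1, Nat.sub_lt (NeZero.pos m) one_pos⟩, fun i => by
      rw [Fin.le_def]; simp only; omega⟩
  rw [aux_total, ← aux_sum_fiber (fun X : Fin m → P => X t), Finset.sum_filter]
  refine Finset.sum_congr rfl fun T _ => ?_
  split_ifs with h
  · exact aux_main rk hsimp σ hpos t ht T h
  · rw [Nat.card_eq_zero]
    left
    refine ⟨?_⟩
    rintro ⟨X, rfl, -, hr⟩
    apply h
    rw [hr t]
    congr 1; ext i; simp [ht]

/-- For a finite pure simplicial poset `P` of rank `k`, a composition `σ` of `k`,
and any rearrangement `π` of the parts of `σ`, the sum of `d^σ(F)` over all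
rank-`σ_1` elements `F` equals the sum of `d^π(G)` over all rank-`π_1` elements `G`. -/
theorem sum_flagDeg_perm_invariant
    {P : Type*} [Fintype P] [PartialOrder P] [OrderBot P]
    (rk : P → ℕ) (hsimp : IsSimplicial rk)
    (k : ℕ) (hpure : ∀ x : P, IsMax x → rk x = k)
    {m : ℕ} [NeZero m] (σ π : Fin m → ℕ)
    (hpos : ∀ i, 0 < σ i) (hsum : ∑ i, σ i = k)
    (e : Equiv.Perm (Fin m)) (hπ : π = σ ∘ e) :
    ∑ F ∈ Finset.univ.filter (fun F : P => rk F = σ 0), flagDeg rk σ F =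
      ∑ G ∈ Finset.univ.filter (fun G : P => rk G = π 0), flagDeg rk π G := by
  subst hπ
  rw [aux_total2 rk hsimp σ hpos, aux_total2 rk hsimp (σ ∘ e) (fun i => hpos (e i))]
  have hs : ∑ i, (σ ∘ e) i = ∑ i, σ i := Equiv.sum_comp e σ
  rw [hs]
  refine Finset.sum_congr rfl fun T _ => ?_
  refine Nat.card_congr ((Equiv.arrowCongr (Equiv.refl _) e.symm).subtypeEquiv fun f => ?_)
  rw [← e.forall_congr_right]
  refine forall_congr' fun i => ?_
  simp [Equiv.symm_apply_eq]
end

section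
/- Let P be a finite pure simplicial poset of rank k, and let i be an integer with 0 < i and i ≤ k − i. Then f_i(P) ≤ f_{k−i}(P), where f_r(P) denotes the number of rank-r elements of P. -/
theorem fv_up {α : Type*} [DecidableEq α] (v : Finset α → ℚ) (i m : ℕ) (him : i ≤ m)
    (hv : ∀ T, T.card ≠ i → v T = 0)
    (h : ∀ S : Finset α, S.card = m → ∑ T ∈ S.powerset, v T = 0) (d : ℕ) :
    ∀ S : Finset α, S.card = m + d → ∑ T ∈ S.powerset, v T = 0 := by
  induction d with
  | zero => simpa using h
  | succ d ih =>
    intro S hS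
    have h1 : ∑ x ∈ S, ∑ T ∈ (S.erase x).powerset, v T = 0 := by
      apply Finset.sum_eq_zero
      intro x hx
      apply ih
      rw [Finset.card_erase_of_mem hx]; omega
    have h2 : ∑ x ∈ S, ∑ T ∈ (S.erase x).powerset, v T
        = ∑ T ∈ S.powerset, ∑ x ∈ S \ T, v T := by
      apply Finset.sum_comm'
      intro x T
      simp only [Finset.mem_powerset, Finset.mem_sdiff, Finset.subset_erase]
      tauto
    have h3 : ∑ T ∈ S.powerset, ∑ x ∈ S \ T, v T
        = ((m + (d + 1) : ℚ) - i) * ∑ T ∈ S.powerset, v T := by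
      rw [Finset.mul_sum]
      apply Finset.sum_congr rfl
      intro T hT
      rw [Finset.mem_powerset] at hT
      by_cases hc : T.card = i
      · rw [Finset.sum_const, Finset.card_sdiff_of_subset hT, nsmul_eq_mul,
          Nat.cast_sub (Finset.card_le_card hT), hS, hc]
        push_cast; ring
      · simp [hv T hc]
    rw [h2, h3] at h1
    rcases mul_eq_zero.1 h1 with h4 | h4
    · have : (i : ℚ) ≤ m := by exact_mod_cast him
      have : (0 : ℚ) ≤ d := Nat.cast_nonneg d
      linarith
    · exact h4

theorem fv_incl {α : Type*} [DecidableEq α] (v : Finset α → ℚ) (m : ℕ)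
    (h : ∀ S : Finset α, m ≤ S.card → ∑ T ∈ S.powerset, v T = 0) (B : Finset α) :
    ∀ S : Finset α, B ⊆ S → m + B.card ≤ S.card →
      ∑ T ∈ S.powerset.filter (fun T => B ⊆ T), v T = 0 := by
  induction B using Finset.induction_on with
  | empty =>
    intro S _ hS
    simpa using h S (by simpa using hS)
  | insert x B hx ih =>
    intro S hB hS
    rw [Finset.card_insert_of_notMem hx] at hS
    rw [Finset.insert_subset_iff] at hB
    have e1 := ih S hB.2 (by omega)
    have e2 := ih (S.erase x) (Finset.subset_erase.2 ⟨hB.2, hx⟩)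
      (by rw [Finset.card_erase_of_mem hB.1]; omega)
    rw [← Finset.sum_filter_add_sum_filter_not _ (fun T => x ∈ T), Finset.filter_filter,
      Finset.filter_filter] at e1
    have e3 : S.powerset.filter (fun T => B ⊆ T ∧ x ∉ T)
        = (S.erase x).powerset.filter (fun T => B ⊆ T) := by
      ext T
      simp only [Finset.mem_filter, Finset.mem_powerset, Finset.subset_erase]
      tauto
    have e4 : S.powerset.filter (fun T => insert x B ⊆ T)
        = S.powerset.filter (fun T => B ⊆ T ∧ x ∈ T) := by
      ext T
      simp only [Finset.mem_filter, Finset.mem_powerset, Finset.insert_subset_iff]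
      tauto
    rw [e3, e2, add_zero] at e1
    rw [e4, e1]

theorem fv_bool {k : ℕ} (v : Finset (Fin k) → ℚ) (i : ℕ) (hik : i + i ≤ k)
    (hv : ∀ T, T.card ≠ i → v T = 0)
    (h : ∀ S : Finset (Fin k), S.card = k - i → ∑ T ∈ S.powerset, v T = 0) (A) : v A = 0 := by
  by_cases hA : A.card = i
  · have := fv_incl v (k - i) (fun S hS => fv_up v i (k - i) (by omega) hv h
      (S.card - (k - i)) S (by omega)) A Finset.univ (Finset.subset_univ _)
      (by rw [hA, Finset.card_univ, Fintype.card_fin]; omega)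
    rw [Finset.sum_eq_single A] at this
    · exact this
    · intro T hT hne
      apply hv
      intro hc
      exact hne (Finset.eq_of_subset_of_card_le (Finset.mem_filter.1 hT).2 (by omega)).symm
    · simp
  · exact hv A hA

theorem fv_rank {P : Type*} [Fintype P] [PartialOrder P] [OrderBot P]
    (rk : P → ℕ) (hsimp : IsSimplicial rk) (F : P)
    (e : Set.Icc (⊥ : P) F ≃o Finset (Fin (rk F))) (S : Finset (Fin (rk F))) :
    rk (e.symm S : P) = S.card := by
  classical
  obtain ⟨f⟩ := hsimp (e.symm S : P)
  have c1 := Nat.card_congr f.toEquiv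
  have c2 : Nat.card (Set.Icc (⊥ : P) (e.symm S : P)) = Nat.card S.powerset := by
    refine Nat.card_congr
      { toFun := fun x => ⟨e ⟨x.1, bot_le, x.2.2.trans (e.symm S).2.2⟩, ?_⟩
        invFun := fun T => ⟨(e.symm T.1 : P), bot_le, ?_⟩
        left_inv := ?_
        right_inv := ?_ }
    · rw [Finset.mem_powerset]
      exact (e.le_symm_apply (x := ⟨x.1, bot_le, x.2.2.trans (e.symm S).2.2⟩)).1 x.2.2
    · exact e.symm.monotone (Finset.mem_powerset.1 T.2)
    · intro x; simp
    · intro T; exact Subtype.ext (e.apply_symm_apply T.1)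
  rw [c2] at c1
  simp only [Nat.card_eq_fintype_card, Fintype.card_coe, Finset.card_powerset,
    Fintype.card_finset, Fintype.card_fin] at c1
  exact (Nat.pow_right_injective le_rfl c1).symm

theorem fv_inj {P : Type*} [Fintype P] [PartialOrder P] [OrderBot P] [DecidableLE P]
    (rk : P → ℕ) (hsimp : IsSimplicial rk)
    (k : ℕ) (hpure : ∀ x : P, IsMax x → rk x = k)
    (i : ℕ) (hik : i + i ≤ k) (w : P → ℚ) (hw : ∀ x, rk x ≠ i → w x = 0)
    (h : ∀ y, rk y = k - i → ∑ x with x ≤ y, w x = 0) (x : P) : w x = 0 := by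
  classical
  obtain ⟨F, hxF, hF⟩ := Finite.exists_le_maximal (p := fun _ : P => True) (a := x) trivial
  have hF' : IsMax F := fun b hb => hF.2 trivial hb
  have hk := hpure F hF'
  obtain ⟨e⟩ := hsimp F
  have key := fv_bool (fun T => w (e.symm T)) i (by omega)
    (fun T hT => hw _ (by rwa [fv_rank rk hsimp]))
    (fun S hS => by
      rw [← h (e.symm S) (by rw [fv_rank rk hsimp, hS, hk])]
      refine Finset.sum_bij (fun T _ => (e.symm T : P)) ?_ ?_ ?_ ?_
      · intro T hT
        simp only [Finset.mem_filter, Finset.mem_univ, true_and]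
        exact e.symm.monotone (Finset.mem_powerset.1 hT)
      · intro T _ T' _ hTT
        exact e.symm.injective (Subtype.ext hTT)
      · intro y hy
        simp only [Finset.mem_filter, Finset.mem_univ, true_and] at hy
        refine ⟨e ⟨y, bot_le, hy.trans (e.symm S).2.2⟩, ?_, by simp⟩
        rw [Finset.mem_powerset]
        exact (e.le_symm_apply (x := ⟨y, bot_le, hy.trans (e.symm S).2.2⟩)).1 hy
      · intros; rfl)
    (e ⟨x, bot_le, hxF⟩)
  simpa using key

/-- For a finite pure simplicial poset `P` of rank `k` and `0 < i ≤ k − i`,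
the `f`-vector satisfies `f_i(P) ≤ f_{k−i}(P)`. -/
theorem fvector_inequality
    {P : Type*} [Fintype P] [PartialOrder P] [OrderBot P]
    (rk : P → ℕ) (hsimp : IsSimplicial rk)
    (k : ℕ) (hpure : ∀ x : P, IsMax x → rk x = k)
    (i : ℕ) (hi : 0 < i) (hik : i ≤ k - i) :
    (Finset.univ.filter (fun x : P => rk x = i)).card ≤
      (Finset.univ.filter (fun x : P => rk x = k - i)).card := by
  classical
  let ext : ({x : P // rk x = i} → ℚ) → P → ℚ :=
    fun w x => if hx : rk x = i then w ⟨x, hx⟩ else 0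
  let L : ({x : P // rk x = i} → ℚ) →ₗ[ℚ] ({x : P // rk x = k - i} → ℚ) :=
    { toFun := fun w y => ∑ x with x ≤ y.1, ext w x
      map_add' := by
        intro a b
        funext y
        simp only [Pi.add_apply, ← Finset.sum_add_distrib]
        refine Finset.sum_congr rfl fun x _ => ?_
        simp only [ext]
        split_ifs <;> simp
      map_smul' := by
        intro c a
        funext y
        simp only [Pi.smul_apply, smul_eq_mul, Finset.mul_sum, RingHom.id_apply]
        refine Finset.sum_congr rfl fun x _ => ?_
        simp only [ext]
        split_ifs <;> simp }
  have hL : Function.Injective L := by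
    rw [injective_iff_map_eq_zero]
    intro w hw
    funext x
    have := fv_inj rk hsimp k hpure i (by omega) (ext w)
      (fun x hx => by simp only [ext, dif_neg hx])
      (fun y hy => congrFun hw ⟨y, hy⟩) x.1
    simp only [ext, dif_pos x.2] at this
    exact this
  have := LinearMap.finrank_le_finrank_of_injective hL
  simpa [Module.finrank_fintype_fun_eq_card, Fintype.card_subtype] using this
end

section
/- Let P be a finite pure simplicial poset of rank k, let σ = (σ_1, …, σ_m) be a composition of k, and let π = (π_1, …, π_m) be a rearrangement of σ with σ_1 < π_1 and π_l = σ_1 for some l (i.e. π is obtained by moving the part π_1 = σ_l of σ to the front). Then for every rank-σ_1 element F of P, the sum of d^π(G) over all rank-π_1 elements G with F < G equals (π_1 choose σ_1) · d^σ(F). -/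
section helpers
open Finset Classical

variable {P : Type*} [PartialOrder P] [OrderBot P]

lemma rk_eq_card (rk : P → ℕ) (hs : IsSimplicial rk) (T : P)
    (f : Set.Icc (⊥ : P) T ≃o Finset (Fin (rk T))) (G : P) (hG : G ≤ T) :
    rk G = (f ⟨G, bot_le, hG⟩).card := by
  obtain ⟨g⟩ := hs G
  have h1 : Nat.card (Set.Icc (⊥ : P) G) = 2 ^ rk G := by
    rw [Nat.card_congr g.toEquiv]; simp
  have h2 : Nat.card (Set.Icc (⊥ : P) G) = 2 ^ (f ⟨G, bot_le, hG⟩).card := by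
    have e : Set.Icc (⊥ : P) G ≃ {s // s ∈ (f ⟨G, bot_le, hG⟩).powerset} :=
      { toFun := fun x => ⟨f ⟨x.1, bot_le, x.2.2.trans hG⟩, by
          rw [Finset.mem_powerset, ← Finset.le_iff_subset, f.le_iff_le]
          exact x.2.2⟩
        invFun := fun s => ⟨(f.symm s.1).1, bot_le, by
          have h := Finset.mem_powerset.1 s.2
          rw [← Finset.le_iff_subset, ← f.symm_apply_le] at h
          exact h⟩
        left_inv := fun x => by simp
        right_inv := fun s => Subtype.ext (f.apply_symm_apply s.1) }
    rw [Nat.card_congr e, Nat.card_eq_fintype_card, Fintype.card_coe, Finset.card_powerset]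
  exact Nat.pow_right_injective le_rfl (h1.symm.trans h2)

lemma card_between {n : ℕ} (A : Finset (Fin n)) (r : ℕ) (hr : A.card ≤ r) :
    (univ.filter (fun s : Finset (Fin n) => s.card = r ∧ A ⊆ s)).card
      = (n - A.card).choose (r - A.card) := by
  have : (n - A.card) = (Aᶜ).card := by simp [Finset.card_compl]
  rw [this, ← Finset.card_powersetCard]
  refine Finset.card_bij' (fun s _ => s \ A) (fun s _ => s ∪ A) ?_ ?_ ?_ ?_
  · intro s hs
    simp only [mem_filter, mem_univ, true_and] at hs
    rw [mem_powersetCard]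
    refine ⟨?_, ?_⟩
    · intro x hx; simp at hx ⊢; exact hx.2
    · rw [card_sdiff_of_subset hs.2, hs.1]
  · intro s hs
    rw [mem_powersetCard] at hs
    simp only [mem_filter, mem_univ, true_and]
    refine ⟨?_, subset_union_right⟩
    rw [card_union_of_disjoint, hs.2]
    · omega
    · exact (Finset.subset_compl_iff_disjoint_right.1 hs.1)
  · intro s hs
    simp only [mem_filter, mem_univ, true_and] at hs
    exact sdiff_union_of_subset hs.2
  · intro s hs
    rw [mem_powersetCard] at hs
    exact union_sdiff_cancel_right (Finset.subset_compl_iff_disjoint_right.1 hs.1)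

variable [Fintype P]

lemma card_mid (rk : P → ℕ) (hs : IsSimplicial rk) (F T : P) (hFT : F ≤ T) (r : ℕ)
    (hr : rk F < r) :
    (univ.filter (fun G : P => (rk G = r ∧ F < G) ∧ G ≤ T)).card
      = (rk T - rk F).choose (r - rk F) := by
  obtain ⟨f⟩ := hs T
  have hF := rk_eq_card rk hs T f F hFT
  rw [hF, ← card_between _ r (by omega)]
  symm
  refine Finset.card_bij (fun s _ => (f.symm s).1) ?_ ?_ ?_
  · intro s hs'
    simp only [mem_filter, mem_univ, true_and] at hs' ⊢
    have hle : (f.symm s).1 ≤ T := (f.symm s).2.2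
    have h1 : rk (f.symm s).1 = r := by
      rw [rk_eq_card rk hs T f _ hle, ← hs'.1]
      exact congrArg Finset.card (f.apply_symm_apply s)
    refine ⟨⟨h1, lt_of_le_of_ne ?_ ?_⟩, hle⟩
    · have h := hs'.2
      rw [← Finset.le_iff_subset, ← f.le_symm_apply] at h
      exact h
    · intro h; rw [← h] at h1; omega
  · intro s _ t _ h
    exact f.symm.injective (Subtype.ext h)
  · intro G hG
    simp only [mem_filter, mem_univ, true_and] at hG
    refine ⟨f ⟨G, bot_le, hG.2⟩, ?_, by simp⟩
    simp only [mem_filter, mem_univ, true_and]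
    refine ⟨by rw [← rk_eq_card rk hs T f G hG.2, hG.1.1], ?_⟩
    rw [← Finset.le_iff_subset, f.le_iff_le]
    exact hG.1.2.le

/-- number of elements of rank `k` above `F`. -/
noncomputable def numAbove (rk : P → ℕ) (k : ℕ) (F : P) : ℕ :=
  (univ.filter (fun T : P => rk T = k ∧ F ≤ T)).card

lemma sum_numAbove (rk : P → ℕ) (hs : IsSimplicial rk) (F : P) (k r : ℕ) (hr : rk F < r) :
    ∑ G ∈ univ.filter (fun G : P => rk G = r ∧ F < G), numAbove rk k G
      = (k - rk F).choose (r - rk F) * numAbove rk k F := by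
  have : ∑ G ∈ univ.filter (fun G : P => rk G = r ∧ F < G), numAbove rk k G
      = ∑ T ∈ univ.filter (fun T : P => rk T = k ∧ F ≤ T),
        (univ.filter (fun G : P => (rk G = r ∧ F < G) ∧ G ≤ T)).card := by
    simp only [numAbove, Finset.card_eq_sum_ones]
    apply Finset.sum_comm'
    intro G T
    simp only [mem_filter, mem_univ, true_and]
    constructor
    · rintro ⟨⟨a, b⟩, c, d⟩; exact ⟨⟨⟨a, b⟩, d⟩, c, b.le.trans d⟩
    · rintro ⟨⟨⟨a, b⟩, d⟩, c, _⟩; exact ⟨⟨a, b⟩, c, d⟩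
  rw [this, Finset.sum_congr rfl (g := fun _ => (k - rk F).choose (r - rk F))]
  · rw [sum_const, numAbove, smul_eq_mul, mul_comm]
  · intro T hT
    simp only [mem_filter, mem_univ, true_and] at hT
    rw [card_mid rk hs F T hT.2 r hr, hT.1]

/-- number of flags with prescribed ranks. -/
noncomputable def flagR (rk : P → ℕ) {n : ℕ} (r : Fin (n + 1) → ℕ) (F : P) : ℕ :=
  Nat.card {X : Fin (n + 1) → P // X 0 = F ∧ StrictMono X ∧ ∀ j, rk (X j) = r j}

lemma flagR_succ (rk : P → ℕ) {n : ℕ} (r : Fin (n + 2) → ℕ) (F : P) (hF : rk F = r 0) :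
    flagR rk r F = ∑ G ∈ univ.filter (fun G : P => rk G = r 1 ∧ F < G),
      flagR rk (Fin.tail r) G := by
  have e : {X : Fin (n + 2) → P // X 0 = F ∧ StrictMono X ∧ ∀ j, rk (X j) = r j} ≃
      Σ G : {G // G ∈ univ.filter (fun G : P => rk G = r 1 ∧ F < G)},
        {X : Fin (n + 1) → P // X 0 = G.1 ∧ StrictMono X ∧ ∀ j, rk (X j) = Fin.tail r j} :=
    { toFun := fun X => ⟨⟨X.1 1, by
          obtain ⟨X, h0, hm, hr⟩ := X
          simp only [mem_filter, mem_univ, true_and]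
          exact ⟨hr 1, h0 ▸ hm (by simp)⟩⟩,
          ⟨Fin.tail X.1, rfl, fun i j hij => X.2.2.1 (Fin.succ_lt_succ_iff.2 hij),
            fun j => X.2.2.2 j.succ⟩⟩
      invFun := fun Y => ⟨Fin.cons F Y.2.1, rfl, by
          obtain ⟨⟨G, hG⟩, X, h0, hm, hr⟩ := Y
          simp only [mem_filter, mem_univ, true_and] at hG
          rw [Fin.strictMono_iff_lt_succ]
          intro i
          refine Fin.cases ?_ (fun i => ?_) i
          · simpa [h0] using hG.2
          · simp only [← Fin.succ_castSucc, Fin.cons_succ]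
            exact hm Fin.castSucc_lt_succ, by
          obtain ⟨⟨G, hG⟩, X, h0, hm, hr⟩ := Y
          intro j
          refine Fin.cases ?_ (fun i => ?_) j
          · simpa using hF
          · exact hr i⟩
      left_inv := by
        rintro ⟨X, h0, hm, hr⟩
        apply Subtype.ext
        simp only
        rw [← h0]
        exact Fin.cons_self_tail X
      right_inv := by
        rintro ⟨⟨G, hG⟩, X, h0, hm, hr⟩
        simp only at h0
        subst h0
        rfl }
  unfold flagR
  rw [Nat.card_congr e, Nat.card_sigma, Finset.univ_eq_attach]
  exact Finset.sum_attach _ (fun G => Nat.card {X : Fin (n + 1) → P //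
    X 0 = G ∧ StrictMono X ∧ ∀ j, rk (X j) = Fin.tail r j})

lemma flagR_formula (rk : P → ℕ) (hs : IsSimplicial rk) {n : ℕ} (r : Fin (n + 1) → ℕ)
    (hr : StrictMono r) (F : P) (hF : rk F = r 0) :
    flagR rk r F * ∏ i : Fin n, (r i.succ - r i.castSucc).factorial
      = (r (Fin.last n) - r 0).factorial * numAbove rk (r (Fin.last n)) F := by
  induction n generalizing F with
  | zero =>
    haveI : Subsingleton (Fin (0 + 1)) := inferInstanceAs (Subsingleton (Fin 1))
    have h1 : flagR rk r F = 1 := by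
      unfold flagR
      rw [Nat.card_eq_one_iff_unique]
      refine ⟨⟨fun X Y => ?_⟩, ⟨fun _ => F, rfl, ?_, ?_⟩⟩
      · apply Subtype.ext; funext i
        rw [Subsingleton.elim i 0, X.2.1, Y.2.1]
      · exact Subsingleton.strictMono _
      · intro j; rw [Subsingleton.elim j 0, hF]
    have h2 : numAbove rk (r (Fin.last 0)) F = 1 := by
      unfold numAbove
      rw [Finset.card_eq_one]
      refine ⟨F, ?_⟩
      ext T
      simp only [mem_filter, mem_univ, true_and, mem_singleton]
      constructor
      · rintro ⟨h, hle⟩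
        by_contra hne
        obtain ⟨f⟩ := hs T
        have h1 := rk_eq_card rk hs T f F hle
        have h2 := rk_eq_card rk hs T f T le_rfl
        have : f ⟨F, bot_le, hle⟩ < f ⟨T, bot_le, le_rfl⟩ := by
          rw [f.lt_iff_lt]; exact lt_of_le_of_ne hle (fun h => hne (congrArg Subtype.val h).symm)
        have := Finset.card_lt_card this
        rw [← h1, ← h2, h, hF] at this
        exact absurd this (by simp)
      · rintro rfl; exact ⟨hF, le_rfl⟩
    rw [h1, h2]; simp
  | succ n ih =>
    have h01 : r 0 < r 1 := hr (by simp)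
    have h1l : r 1 ≤ r (Fin.last (n + 1)) := hr.monotone (Fin.le_last _)
    rw [flagR_succ rk r F hF, Fin.prod_univ_succ, mul_left_comm, Finset.sum_mul]
    have key : ∀ G ∈ univ.filter (fun G : P => rk G = r 1 ∧ F < G),
        flagR rk (Fin.tail r) G *
          ∏ i : Fin n, (r i.succ.succ - r i.succ.castSucc).factorial
        = (r (Fin.last (n + 1)) - r 1).factorial * numAbove rk (r (Fin.last (n + 1))) G := by
      intro G hG
      simp only [mem_filter, mem_univ, true_and] at hG
      exact ih (Fin.tail r) (fun i j hij => hr (Fin.succ_lt_succ_iff.2 hij)) G hG.1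
    rw [Finset.sum_congr rfl key, ← Finset.mul_sum, sum_numAbove rk hs F _ _ (by omega), hF]
    have := Nat.choose_mul_factorial_mul_factorial
      (show r 1 - r 0 ≤ r (Fin.last (n + 1)) - r 0 by omega)
    rw [← this, show r (Fin.last (n + 1)) - r 0 - (r 1 - r 0) = r (Fin.last (n + 1)) - r 1 by omega]
    simp only [Fin.succ_zero_eq_one, Fin.castSucc_zero]
    ring

lemma flagDeg_formula (rk : P → ℕ) (hs : IsSimplicial rk) {n : ℕ} (σ : Fin (n + 1) → ℕ)
    (hpos : ∀ i, 0 < σ i) (F : P) (hF : rk F = σ 0) :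
    flagDeg rk σ F * ∏ i : Fin n, (σ i.succ).factorial
      = (∑ i, σ i - σ 0).factorial * numAbove rk (∑ i, σ i) F := by
  have hI : ∀ i : Fin n, Finset.Iic i.succ = insert i.succ (Finset.Iic i.castSucc) := by
    intro i; ext j
    simp only [mem_insert, mem_Iic, Fin.le_def, Fin.ext_iff, Fin.val_succ, Fin.val_castSucc]
    omega
  have hstep : ∀ i : Fin n, ∑ x ∈ Finset.Iic i.succ, σ x
      = σ i.succ + ∑ x ∈ Finset.Iic i.castSucc, σ x := by
    intro i
    rw [hI, Finset.sum_insert]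
    simp [Fin.le_def]
  have h0 : ∑ x ∈ Finset.Iic (0 : Fin (n + 1)), σ x = σ 0 := by
    have : Finset.Iic (0 : Fin (n + 1)) = {0} := by ext j; simp
    rw [this, sum_singleton]
  have hl : ∑ x ∈ Finset.Iic (Fin.last n), σ x = ∑ i, σ i := by
    have : Finset.Iic (Fin.last n) = univ := by ext j; simp [Fin.le_last]
    rw [this]
  have := flagR_formula rk hs (fun j => ∑ i ∈ Finset.Iic j, σ i) (by
    rw [Fin.strictMono_iff_lt_succ]
    intro i
    have := hpos i.succ
    simp only [hstep]; omega) F (by simp only [h0, hF])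
  simp only [h0, hl, hstep, Nat.add_sub_cancel] at this
  exact this

end helpers

/-- Let `P` be a finite pure simplicial poset of rank `k`, `σ` a composition of `k`,
and `π` a rearrangement of `σ` with `σ_1 < π_1` and `π_l = σ_1` for some `l`
(i.e. `π` is obtained by moving the part `π_1 = σ_l` of `σ` to the front).
Then for every rank-`σ_1` element `F`, summing `d^π(G)` over all rank-`π_1`
elements `G` with `F < G` gives `(π_1 choose σ_1) · d^σ(F)`. -/
theorem sum_flagDeg_above
    {P : Type*} [Fintype P] [PartialOrder P] [OrderBot P]
    [DecidableRel ((· < ·) : P → P → Prop)]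
    (rk : P → ℕ) (hsimp : IsSimplicial rk)
    (k : ℕ) (hpure : ∀ x : P, IsMax x → rk x = k)
    {m : ℕ} [NeZero m] (σ π : Fin m → ℕ)
    (hpos : ∀ i, 0 < σ i) (hsum : ∑ i, σ i = k)
    (e : Equiv.Perm (Fin m)) (hπ : π = σ ∘ e)
    (h1 : σ 0 < π 0) (l : Fin m) (hl : π l = σ 0)
    (F : P) (hF : rk F = σ 0) :
    ∑ G ∈ Finset.univ.filter (fun G : P => rk G = π 0 ∧ F < G), flagDeg rk π G =
      (π 0).choose (σ 0) * flagDeg rk σ F := by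
  obtain ⟨n, rfl⟩ : ∃ n, m = n + 1 := Nat.exists_eq_succ_of_ne_zero (NeZero.ne m)
  have hpos' : ∀ i, 0 < π i := fun i => by rw [hπ]; exact hpos _
  have hsum' : ∑ i, π i = k := by
    rw [hπ, ← hsum]; exact Equiv.sum_comp e σ
  have hprod : ∏ i, (π i).factorial = ∏ i, (σ i).factorial := by
    rw [hπ]; exact Equiv.prod_comp e (fun i => (σ i).factorial)
  have hπk : π 0 ≤ k := by
    rw [← hsum']; exact Finset.single_le_sum (fun _ _ => Nat.zero_le _) (Finset.mem_univ 0)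
  have hB := flagDeg_formula rk hsimp σ hpos F hF
  rw [hsum] at hB
  have hA : (∑ G ∈ Finset.univ.filter (fun G : P => rk G = π 0 ∧ F < G), flagDeg rk π G)
      * ∏ i : Fin n, (π i.succ).factorial
      = (k - π 0).factorial * ((k - σ 0).choose (π 0 - σ 0) * numAbove rk k F) := by
    have h := sum_numAbove rk hsimp F k (π 0) (by omega)
    rw [hF] at h
    rw [← h, Finset.sum_mul, Finset.mul_sum]
    refine Finset.sum_congr (by congr) ?_
    intro G hG
    have hG' : rk G = π 0 := by
      simp only [Finset.mem_filter] at hG; exact hG.2.1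
    have := flagDeg_formula rk hsimp π hpos' G hG'
    rwa [hsum'] at this
  have hc1 := Nat.choose_mul_factorial_mul_factorial (show π 0 - σ 0 ≤ k - σ 0 by omega)
  rw [show k - σ 0 - (π 0 - σ 0) = k - π 0 by omega] at hc1
  have hc2 := Nat.choose_mul_factorial_mul_factorial h1.le
  rw [Fin.prod_univ_succ, Fin.prod_univ_succ] at hprod
  generalize (∑ G ∈ Finset.univ.filter (fun G : P => rk G = π 0 ∧ F < G), flagDeg rk π G) = A
    at hA ⊢
  have hp1 : 0 < ∏ i : Fin n, (π i.succ).factorial :=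
    Finset.prod_pos fun i _ => Nat.factorial_pos _
  have hp2 := Nat.factorial_pos (σ 0)
  have hp3 := Nat.factorial_pos (π 0 - σ 0)
  refine Nat.eq_of_mul_eq_mul_right (Nat.mul_pos (Nat.mul_pos hp1 hp2) hp3) ?_
  generalize (∏ i : Fin n, (π i.succ).factorial) = p at *
  generalize (∏ i : Fin n, (σ i.succ).factorial) = s at *
  generalize flagDeg rk σ F = B at *
  calc A * (p * (σ 0).factorial * (π 0 - σ 0).factorial)
      = (A * p) * ((σ 0).factorial * (π 0 - σ 0).factorial) := by ring
    _ = ((k - σ 0).choose (π 0 - σ 0) * (π 0 - σ 0).factorial * (k - π 0).factorial)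
          * numAbove rk k F * (σ 0).factorial := by rw [hA]; ring
    _ = B * ((σ 0).factorial * s) := by rw [hc1, ← hB]; ring
    _ = B * (((π 0).choose (σ 0) * (σ 0).factorial * (π 0 - σ 0).factorial) * p) := by
          rw [← hprod, hc2]
    _ = _ := by ring
end

section
/- Let G be a finite simple graph and let d(G) be its degree sequence listed in weakly decreasing order. Then the conjugate sequence d(G)^T majorizes d(G): (d(G))^T ⊵ d(G). -/
/-- The degree sequence of a finite simple graph, as a multiset. -/
def degreeSequence {V : Type*} [Fintype V] (G : SimpleGraph V) [DecidableRel G.Adj] :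
    Multiset ℕ :=
  Finset.univ.val.map (fun v => G.degree v)

/-- The conjugate of the degree sequence: its `i`-th entry (for `i ≥ 1`) is the
number of vertices of degree at least `i`.  Entries with `i` beyond the number of
vertices are `0` and may be omitted (sequences are padded with zeros). -/
def conjugateDegreeSequence {V : Type*} [Fintype V] (G : SimpleGraph V)
    [DecidableRel G.Adj] : Multiset ℕ :=
  (Finset.Icc 1 (Fintype.card V)).val.map
    (fun i => (Finset.univ.filter (fun v => i ≤ G.degree v)).card)

theorem aux_sum {V : Type*} [Fintype V] (d : V → ℕ) (m : ℕ) :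
    ((List.range' 1 m).map (fun i => (Finset.univ.filter (fun v => i ≤ d v)).card)).sum
      = ∑ v, min m (d v) := by
  have h : ((List.range' 1 m).map (fun i => (Finset.univ.filter (fun v => i ≤ d v)).card)).sum
      = ∑ i ∈ Finset.range m, (Finset.univ.filter (fun v => i + 1 ≤ d v)).card := by
    induction m with
    | zero => simp
    | succ k ih =>
      rw [List.range'_concat, List.map_append, List.sum_append, ih, Finset.sum_range_succ]
      simp [add_comm]
  rw [h]
  simp only [Finset.card_filter]
  rw [Finset.sum_comm]
  refine Finset.sum_congr rfl fun v _ => ?_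
  rw [← Finset.card_filter]
  have : (Finset.range m).filter (fun i => i + 1 ≤ d v) = Finset.range (min m (d v)) := by
    ext i; simp
  rw [this, Finset.card_range]

theorem aux_sort {V : Type*} [Fintype V] (G : SimpleGraph V) [DecidableRel G.Adj] :
    (conjugateDegreeSequence G).sort (· ≥ ·) = (List.range' 1 (Fintype.card V)).map
      (fun i => (Finset.univ.filter (fun v => i ≤ G.degree v)).card) := by
  have h : conjugateDegreeSequence G = (((List.range' 1 (Fintype.card V)).map
      (fun i => (Finset.univ.filter (fun v => i ≤ G.degree v)).card) : List ℕ) : Multiset ℕ) := by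
    rfl
  rw [h, Multiset.coe_sort]
  apply List.mergeSort_of_pairwise
  rw [List.pairwise_map]
  refine List.Pairwise.imp ?_ (List.pairwise_lt_range' (s := 1) (n := Fintype.card V) (step := 1))
  intro a b hab
  simp only [ge_iff_le, decide_eq_true_eq]
  apply Finset.card_le_card
  intro v
  simp
  omega

theorem aux_double {V : Type*} [Fintype V] (G : SimpleGraph V) [DecidableRel G.Adj]
    (S : Finset V) : ∑ v ∈ S, G.degree v ≤ ∑ v, min S.card (G.degree v) := by
  classical
  have h : ∑ v ∈ S, G.degree v = ∑ w, (S.filter (fun v => G.Adj v w)).card := by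
    simp only [Finset.card_filter]
    rw [Finset.sum_comm]
    refine Finset.sum_congr rfl fun v _ => ?_
    rw [← Finset.card_filter, ← G.card_neighborFinset_eq_degree, G.neighborFinset_eq_filter]
  rw [h]
  refine Finset.sum_le_sum fun w _ => le_min (Finset.card_filter_le _ _) ?_
  rw [← G.card_neighborFinset_eq_degree]
  apply Finset.card_le_card
  intro v
  simp [G.adj_comm]

theorem conjugate_majorizes_degreeSequence
    {V : Type*} [Fintype V] (G : SimpleGraph V) [DecidableRel G.Adj] :
    Majorizes (conjugateDegreeSequence G) (degreeSequence G) := by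
  refine ⟨?_, fun r => ?_⟩
  · rw [← Multiset.sort_eq (conjugateDegreeSequence G) (· ≥ ·), aux_sort, Multiset.sum_coe,
      aux_sum]
    change _ = ∑ v, G.degree v
    exact Finset.sum_congr rfl fun v _ => min_eq_right (G.degree_lt_card_verts v).le
  · have ht : (List.range' 1 (Fintype.card V)).take r = List.range' 1 (min r (Fintype.card V)) := by
      apply List.ext_getElem
      · simp
      · intro i h1 h2
        simp
    rw [aux_sort, ← List.map_take, ht, aux_sum]
    have hp : ((degreeSequence G).sort (· ≥ ·)).Perm
        ((Finset.univ : Finset V).toList.map fun v => G.degree v) := by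
      rw [← Multiset.coe_eq_coe, Multiset.sort_eq, ← Multiset.map_coe, Finset.coe_toList]
      rfl
    obtain ⟨l, hl, hs⟩ := (List.take_sublist r _).subperm.trans hp.subperm
    obtain ⟨L, hL, rfl⟩ := List.sublist_map_iff.1 hs
    have hn : L.Nodup := hL.nodup (Finset.nodup_toList _)
    have hlen := hl.length_eq
    have hlen2 := hp.length_eq
    simp only [List.length_map, List.length_take, Finset.length_toList, Finset.card_univ]
      at hlen hlen2
    rw [← hl.sum_eq]
    have := aux_double G ⟨(L : Multiset V), hn⟩
    have hc : (⟨(L : Multiset V), hn⟩ : Finset V).card = min r (Fintype.card V) := by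
      rw [← hlen2, ← hlen]
      rfl
    rw [hc] at this
    exact this
end

section
/- Let Δ be a finite pure abstract simplicial complex of rank k (every maximal face has k vertices) and let 0 < i < k. Then the conjugate of the degree sequence d^{(i,k−i)}(Δ) majorizes the degree sequence d^{(k−i,i)}(Δ): (d^{(i,k−i)}(Δ))^T ⊵ d^{(k−i,i)}(Δ). -/
/-- The face-to-face degree sequence `d^{(r,k−r)}(Δ)` of a simplicial complex `Δ`:
the multiset whose entries, indexed by the rank-`r` (i.e. cardinality-`r`) faces `F`
of `Δ`, record the number of rank-`k` faces containing `F`. -/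
def faceDegSeq {α : Type*} [DecidableEq α] (Δ : Finset (Finset α)) (r k : ℕ) :
    Multiset ℕ :=
  ((Δ.filter (fun F => F.card = r)).val).map
    (fun F => (Δ.filter (fun H => H.card = k ∧ F ⊆ H)).card)

/-- The conjugate of `d^{(r,k−r)}(Δ)`: its `i`-th entry (for `i ≥ 1`) is the number
of rank-`r` faces whose degree is at least `i`.  The degree of a face is at most the
number of rank-`k` faces, so indices `i` beyond that bound contribute `0` and may be
omitted (sequences are padded with zeros). -/
def conjFaceDegSeq {α : Type*} [DecidableEq α] (Δ : Finset (Finset α)) (r k : ℕ) :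
    Multiset ℕ :=
  (Finset.Icc 1 ((Δ.filter (fun H => H.card = k)).card)).val.map
    (fun i => ((Δ.filter (fun F => F.card = r)).filter
      (fun F => i ≤ (Δ.filter (fun H => H.card = k ∧ F ⊆ H)).card)).card)

theorem aux_exists_sub {β : Type*} [DecidableEq β] (s : Finset β) (f : β → ℕ) (r : ℕ) :
    ∃ T ⊆ s, T.card ≤ r ∧ (((s.val.map f).sort (· ≥ ·)).take r).sum = ∑ x ∈ T, f x := by
  obtain ⟨l, hl, hp⟩ : ∃ l : List β, (l : Multiset β) = s.val ∧
      l.map f = (s.val.map f).sort (· ≥ ·) := by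
    have h : (((s.val.map f).sort (· ≥ ·) : List ℕ) : Multiset ℕ) = s.val.map f :=
      Multiset.sort_eq _ _
    have h2 : ((s.toList.map f : List ℕ) : Multiset ℕ) = s.val.map f := by
      rw [← Multiset.map_coe, Finset.coe_toList]
    have h3 : ((s.val.map f).sort (· ≥ ·)).Perm (s.toList.map f) :=
      Multiset.coe_eq_coe.1 (h.trans h2.symm)
    have h4 : List.Forall₂ (fun a b => a = f b) (s.toList.map f) s.toList := by
      simp [List.forall₂_map_left_iff, List.forall₂_same]
    obtain ⟨l, h6, h7⟩ := List.perm_comp_forall₂ h3 h4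
    refine ⟨l, ?_, ?_⟩
    · rw [Multiset.coe_eq_coe.2 h7, Finset.coe_toList]
    · symm
      have : List.Forall₂ (fun a b => a = b) ((s.val.map f).sort (· ≥ ·)) (l.map f) := by
        rw [List.forall₂_map_right_iff]; exact h6
      rw [List.forall₂_eq_eq_eq] at this; exact this
  have hnd : l.Nodup := by
    rw [← Multiset.coe_nodup, hl]; exact s.nodup
  refine ⟨(l.take r).toFinset, ?_, ?_, ?_⟩
  · intro x hx
    have := List.mem_of_mem_take (List.mem_toFinset.1 hx)
    rw [← Multiset.mem_coe, hl] at this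
    exact this
  · exact (List.toFinset_card_le _).trans (by simp)
  · rw [← hp, List.sum_toFinset _ (hnd.sublist (List.take_sublist _ _)), List.map_take]

theorem aux_sort_anti (f : ℕ → ℕ) (hf : Antitone f) (N r : ℕ) :
    ((((Finset.Icc 1 N).val.map f).sort (· ≥ ·)).take r).sum
      = ∑ j ∈ Finset.Icc 1 (min r N), f j := by
  have key : ∀ M, (Finset.Icc 1 M).val = ((List.range' 1 M : List ℕ) : Multiset ℕ) := by
    intro M
    have : Finset.Icc 1 M = (List.range' 1 M).toFinset := by
      ext x; simp [List.mem_range'_1]; omega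
    rw [this, List.toFinset_val, List.Nodup.dedup List.nodup_range']
  have h : ((Finset.Icc 1 N).val.map f).sort (· ≥ ·) = (List.range' 1 N).map f := by
    apply List.Perm.eq_of_pairwise (le := (· ≥ ·))
    · intro a b _ _ h1 h2; exact le_antisymm h2 h1
    · exact Multiset.pairwise_sort _ _
    · rw [List.pairwise_map]
      exact (List.pairwise_lt_range').imp (fun h => hf h.le)
    · rw [← Multiset.coe_eq_coe, Multiset.sort_eq, key, Multiset.map_coe]
  have ht : (List.range' 1 N).take r = List.range' 1 (min r N) := by
    apply List.ext_getElem <;> simp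
  rw [h, ← List.map_take, ht, Finset.sum, key, Multiset.map_coe, Multiset.sum_coe]

theorem aux_min (d M : ℕ) : ∑ j ∈ Finset.Icc 1 M, (if j ≤ d then 1 else 0) = min d M := by
  rw [← Finset.card_filter]
  have : (Finset.Icc 1 M).filter (fun j => j ≤ d) = Finset.Icc 1 (min d M) := by
    ext x; simp; omega
  rw [this]; simp

theorem aux_conj {β : Type*} (A : Finset β) (d : β → ℕ) (M : ℕ) :
    ∑ j ∈ Finset.Icc 1 M, (A.filter (fun F => j ≤ d F)).card = ∑ F ∈ A, min (d F) M := by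
  simp_rw [Finset.card_filter]
  rw [Finset.sum_comm]
  exact Finset.sum_congr rfl fun F _ => aux_min _ _

theorem aux_deg {α : Type*} [DecidableEq α] (Δ : Finset (Finset α))
    (hdown : ∀ s ∈ Δ, ∀ t ⊆ s, t ∈ Δ) (k r q : ℕ) (hrq : r + q = k)
    (F : Finset α) (hF : F.card = r) :
    (Δ.filter (fun H => H.card = k ∧ F ⊆ H)).card
      = ((Δ.filter (fun G => G.card = q)).filter
          (fun G => Disjoint F G ∧ F ∪ G ∈ Δ)).card := by
  apply Finset.card_bij' (fun H _ => H \ F) (fun G _ => F ∪ G)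
  · intro H hH
    simp only [Finset.mem_filter] at hH ⊢
    obtain ⟨h1, h2, h3⟩ := hH
    refine ⟨⟨hdown _ h1 _ Finset.sdiff_subset, ?_⟩, Finset.disjoint_sdiff, ?_⟩
    · rw [Finset.card_sdiff_of_subset h3]; omega
    · rwa [Finset.union_sdiff_of_subset h3]
  · intro G hG
    simp only [Finset.mem_filter] at hG ⊢
    obtain ⟨⟨h1, h2⟩, h3, h4⟩ := hG
    refine ⟨h4, ?_, Finset.subset_union_left⟩
    rw [Finset.card_union_of_disjoint h3]; omega
  · intro H hH
    simp only [Finset.mem_filter] at hH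
    exact Finset.union_sdiff_of_subset hH.2.2
  · intro G hG
    simp only [Finset.mem_filter] at hG
    exact Finset.union_sdiff_cancel_left hG.2.1

/-- Let `Δ` be a finite pure abstract simplicial complex of rank `k` (nonempty,
closed under subsets, and every maximal face has `k` vertices) and let `0 < i < k`.
Then `(d^{(i,k−i)}(Δ))^T ⊵ d^{(k−i,i)}(Δ)`. -/
theorem conj_faceDegSeq_majorizes
    {α : Type*} [DecidableEq α] (Δ : Finset (Finset α))
    (hne : Δ.Nonempty)
    (hdown : ∀ s ∈ Δ, ∀ t ⊆ s, t ∈ Δ)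
    (k : ℕ)
    (hpure : ∀ s ∈ Δ, (∀ t ∈ Δ, s ⊆ t → t = s) → s.card = k)
    (i : ℕ) (hi : 0 < i) (hik : i < k) :
    Majorizes (conjFaceDegSeq Δ i k) (faceDegSeq Δ (k - i) k) := by
  have hN : ∀ F, (Δ.filter (fun H => H.card = k ∧ F ⊆ H)).card
      ≤ (Δ.filter (fun H => H.card = k)).card := fun F =>
    Finset.card_le_card (Finset.monotone_filter_right _ (fun _ _ h => h.1))
  have hB : ∀ T ⊆ Δ.filter (fun G => G.card = k - i),
      ∑ G ∈ T, (Δ.filter (fun H => H.card = k ∧ G ⊆ H)).card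
      = ∑ F ∈ Δ.filter (fun F => F.card = i),
          (T.filter (fun G => Disjoint F G ∧ F ∪ G ∈ Δ)).card := by
    intro T hT
    have : ∀ G ∈ T, (Δ.filter (fun H => H.card = k ∧ G ⊆ H)).card =
        ((Δ.filter (fun F => F.card = i)).filter
          (fun F => Disjoint F G ∧ F ∪ G ∈ Δ)).card := by
      intro G hG
      rw [aux_deg Δ hdown k (k - i) i (by omega) G (Finset.mem_filter.1 (hT hG)).2]
      simp_rw [disjoint_comm (a := G), Finset.union_comm G]
    rw [Finset.sum_congr rfl this]
    simp_rw [Finset.card_filter _ (Finset.filter _ Δ), Finset.card_filter _ T]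
    exact Finset.sum_comm
  constructor
  · have h1 := aux_conj (Δ.filter (fun F => F.card = i))
      (fun F => (Δ.filter (fun H => H.card = k ∧ F ⊆ H)).card)
      (Δ.filter (fun H => H.card = k)).card
    have h2 := hB _ (Finset.Subset.refl _)
    refine h1.trans (Eq.trans ?_ h2.symm)
    refine Finset.sum_congr rfl fun F hF => ?_
    rw [min_eq_left (hN F)]
    exact aux_deg Δ hdown k i (k - i) (by omega) F (Finset.mem_filter.1 hF).2
  · intro r
    obtain ⟨T, hT, hc, hs⟩ := aux_exists_sub (Δ.filter (fun F => F.card = k - i))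
      (fun F => (Δ.filter (fun H => H.card = k ∧ F ⊆ H)).card) r
    unfold faceDegSeq conjFaceDegSeq
    rw [hs, aux_sort_anti _ ?_, aux_conj, hB T hT]
    · refine Finset.sum_le_sum fun F hF => ?_
      have h1 : (T.filter (fun G => Disjoint F G ∧ F ∪ G ∈ Δ)).card ≤
          (Δ.filter (fun H => H.card = k ∧ F ⊆ H)).card := by
        rw [aux_deg Δ hdown k i (k - i) (by omega) F (Finset.mem_filter.1 hF).2]
        exact Finset.card_le_card (Finset.filter_subset_filter _ hT)
      have h2 := (Finset.card_filter_le T (fun G => Disjoint F G ∧ F ∪ G ∈ Δ)).trans hc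
      exact le_min h1 (le_min h2 (h1.trans (hN F)))
    · intro a b hab
      exact Finset.card_le_card (Finset.monotone_filter_right _ (fun _ _ h => hab.trans h))
end

section
/- Let C be a finite graded poset with minimum element ⊥, pure of rank k (every maximal element has rank k), such that for every element x > ⊥ and every maximal element m ≥ x, the interval [x, m] is isomorphic to a Boolean lattice. Let σ = (σ_1, …, σ_m) be a composition of k and let π = (π_1, …, π_m) be a rearrangement of σ with σ_1 < π_1. If F is an element of rank σ_1 and G is an element of rank π_1 with F < G, then d^σ(F) ≥ d^π(G). -/
section FlagHelpers

open Finset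

abbrev FlagTo {C : Type*} [PartialOrder C] (rk : C → ℕ) {n : ℕ} (ρ : Fin (n + 1) → ℕ)
    (x M : C) : Type _ :=
  {X : Fin (n + 1) → C // X 0 = x ∧ X (Fin.last n) = M ∧ StrictMono X ∧ ∀ j, rk (X j) = ρ j}

theorem rk_strictMono_aux {C : Type*} [Fintype C] [PartialOrder C] (rk : C → ℕ)
    (hgraded : ∀ x y : C, x ⋖ y → rk y = rk x + 1) : StrictMono rk := by
  classical
  let _ : LocallyFiniteOrder C := Fintype.toLocallyFiniteOrder
  rw [strictMono_iff_forall_covBy]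
  intro a b h
  rw [hgraded a b h]
  exact Nat.lt_succ_self _

theorem level_card_aux {C : Type*} [Fintype C] [PartialOrder C] (rk : C → ℕ)
    (hgraded : ∀ x y : C, x ⋖ y → rk y = rk x + 1) (x M : C) (hxM : x ≤ M) (n : ℕ)
    (e : Set.Icc x M ≃o Finset (Fin n)) (r : ℕ) (hr : rk x < r) :
    Nat.card {y : C // x < y ∧ y ≤ M ∧ rk y = r} = (rk M - rk x).choose (r - rk x) := by
  classical
  have key : ∀ s : Finset (Fin n), rk (e.symm s : C) = rk x + s.card := by
    intro s
    induction s using Finset.induction_on with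
    | empty =>
      have : e.symm ∅ = ⟨x, le_rfl, hxM⟩ := by
        apply le_antisymm
        · rw [e.symm_apply_le]
          exact Finset.empty_subset _
        · exact (e.symm ∅).2.1
      rw [this]; simp
    | insert a s ha ih =>
      have h1 : s ⋖ insert a s := Finset.covBy_insert ha
      have h2 : e.symm s ⋖ e.symm (insert a s) := (apply_covBy_apply_iff e.symm).2 h1
      have h3 : (e.symm s : C) ⋖ (e.symm (insert a s) : C) :=
        CovBy.image (OrderEmbedding.subtype (fun c => c ∈ Set.Icc x M)) h2 (by
          have : Set.range (OrderEmbedding.subtype (fun c => c ∈ Set.Icc x M)) = Set.Icc x M := by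
            ext z; simp
          rw [this]; exact Set.ordConnected_Icc)
      rw [hgraded _ _ h3, ih, Finset.card_insert_of_notMem ha]
      ring
  have hn : rk M = rk x + n := by
    have : e.symm Finset.univ = ⟨M, hxM, le_rfl⟩ := by
      apply le_antisymm
      · exact (e.symm Finset.univ).2.2
      · rw [e.le_symm_apply]
        exact Finset.subset_univ _
    have h := key Finset.univ
    rw [this] at h
    simpa using h
  have key2 : ∀ y : Set.Icc x M, rk (y : C) = rk x + (e y).card := by
    intro y
    have := key (e y)
    simpa using this
  let E : {y : C // x < y ∧ y ≤ M ∧ rk y = r} ≃ {s : Finset (Fin n) // s.card = r - rk x} :=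
    { toFun := fun y => ⟨e ⟨y.1, y.2.1.le, y.2.2.1⟩, by
        have := key2 ⟨y.1, y.2.1.le, y.2.2.1⟩
        have h := y.2.2.2
        simp only at this
        omega⟩
      invFun := fun s => ⟨(e.symm s.1 : C), by
        have h := key s.1
        have hs := s.2
        refine ⟨lt_of_le_of_ne (e.symm s.1).2.1 ?_, (e.symm s.1).2.2, by omega⟩
        intro hh
        rw [← hh] at h
        omega⟩
      left_inv := fun y => by ext; simp
      right_inv := fun s => Subtype.ext (e.apply_symm_apply s.1) }
  rw [Nat.card_congr E, Nat.card_eq_fintype_card, hn]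
  simp

theorem flagTo_card_aux {C : Type*} [Fintype C] [PartialOrder C] (rk : C → ℕ)
    (hgraded : ∀ x y : C, x ⋖ y → rk y = rk x + 1) (M : C)
    (n : ℕ) : ∀ (ρ : Fin (n + 1) → ℕ) (_ : StrictMono ρ) (x : C)
    (_ : ∀ y : C, x ≤ y → y ≤ M → ∃ n : ℕ, Nonempty (Set.Icc y M ≃o Finset (Fin n)))
    (_ : x ≤ M) (_ : rk x = ρ 0) (_ : rk M = ρ (Fin.last n)),
    Nat.card (FlagTo rk ρ x M) * ∏ j : Fin n, (ρ j.succ - ρ j.castSucc).factorial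
      = (ρ (Fin.last n) - ρ 0).factorial := by
  classical
  have hsm := rk_strictMono_aux rk hgraded
  induction n with
  | zero =>
    intro ρ hρ x hb hxM hx hM
    have hsub : Subsingleton (Fin (0 + 1)) := inferInstanceAs (Subsingleton (Fin 1))
    have hxM' : x = M := by
      by_contra hne
      have := hsm (lt_of_le_of_ne hxM hne)
      rw [hx, hM] at this
      exact lt_irrefl _ this
    subst hxM'
    have : Nat.card (FlagTo rk ρ x x) = 1 := by
      rw [Nat.card_eq_one_iff_unique]
      refine ⟨⟨?_⟩, ⟨⟨fun _ => x, rfl, rfl, Subsingleton.strictMono _, ?_⟩⟩⟩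
      · intro X Y
        ext j
        rw [Subsingleton.elim j 0, X.2.1, Y.2.1]
      · intro j
        rw [Subsingleton.elim j 0, hx]
    rw [this]; simp
  | succ n ih =>
    intro ρ hρ x hb hxM hx hM
    have h01 : ρ 0 < ρ 1 := hρ (by simp)
    have h1l : ρ 1 ≤ ρ (Fin.last (n + 1)) := hρ.monotone (Fin.le_last _)
    let E : FlagTo rk ρ x M ≃ Σ y : {y : C // x < y ∧ y ≤ M ∧ rk y = ρ 1},
        FlagTo rk (fun j : Fin (n + 1) => ρ j.succ) y.1 M :=
      { toFun := fun X => ⟨⟨X.1 1, by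
            have h := X.2.2.2.1 (show (0 : Fin (n + 2)) < 1 by simp)
            rwa [X.2.1] at h, by
            have h := X.2.2.2.1.monotone (Fin.le_last 1)
            rwa [X.2.2.1] at h, X.2.2.2.2 1⟩,
          ⟨fun j => X.1 j.succ, rfl, X.2.2.1,
            fun a b hab => X.2.2.2.1 (Fin.succ_lt_succ_iff.2 hab), fun j => X.2.2.2.2 _⟩⟩
        invFun := fun Y => ⟨Fin.cons x Y.2.1, rfl, Y.2.2.2.1, by
            rw [Fin.strictMono_iff_lt_succ]
            intro i
            refine Fin.cases ?_ (fun i => ?_) i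
            · have h := Y.1.2.1
              have h2 := Y.2.2.1
              change x < Y.2.1 0
              rwa [h2]
            · exact Y.2.2.2.2.1 (show i.castSucc < i.succ from Fin.castSucc_lt_succ), by
            intro j
            refine Fin.cases ?_ (fun i => ?_) j
            · exact hx
            · exact Y.2.2.2.2.2 i⟩
        left_inv := fun X => by
          apply Subtype.ext
          funext j
          refine Fin.cases ?_ (fun i => ?_) j
          · exact X.2.1.symm
          · rfl
        right_inv := fun Y => by
          obtain ⟨⟨y, hy⟩, ⟨Z, hZ0, hZ⟩⟩ := Y
          dsimp only at hZ0
          subst hZ0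
          rfl }
    rw [Nat.card_congr E, Nat.card_sigma, Fin.prod_univ_succ]
    have hih : ∀ y : {y : C // x < y ∧ y ≤ M ∧ rk y = ρ 1},
        Nat.card (FlagTo rk (fun j : Fin (n + 1) => ρ j.succ) y.1 M) *
          ∏ j : Fin n, (ρ j.succ.succ - ρ j.succ.castSucc).factorial
        = (ρ (Fin.last (n + 1)) - ρ 1).factorial := by
      intro y
      exact ih (fun j : Fin (n + 1) => ρ j.succ)
        (fun a b hab => hρ (Fin.succ_lt_succ_iff.2 hab)) y.1
        (fun z hz hzM => hb z (y.2.1.le.trans hz) hzM) y.2.2.1 y.2.2.2 hM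
    obtain ⟨N, ⟨e⟩⟩ := hb x le_rfl hxM
    have hlev := level_card_aux rk hgraded x M hxM N e (ρ 1) (by omega)
    rw [mul_left_comm, Finset.sum_mul, Finset.sum_congr rfl (fun y _ => hih y), Finset.sum_const,
      Finset.card_univ, ← Nat.card_eq_fintype_card, hlev, hM, hx, smul_eq_mul]
    have := Nat.choose_mul_factorial_mul_factorial
      (show ρ 1 - ρ 0 ≤ ρ (Fin.last (n + 1)) - ρ 0 by omega)
    rw [show ρ (Fin.last (n + 1)) - ρ 0 - (ρ 1 - ρ 0) = ρ (Fin.last (n + 1)) - ρ 1 by omega] at this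
    rw [← this]
    simp only [Fin.succ_zero_eq_one, Fin.castSucc_zero]
    ring

theorem fact_aux (a b c : ℕ) (h : a < b) :
    (a + c).factorial * b.factorial ≤ (b + c).factorial * a.factorial := by
  induction c with
  | zero => simp [mul_comm]
  | succ c ih =>
    rw [← add_assoc, ← add_assoc, Nat.factorial_succ, Nat.factorial_succ, mul_assoc, mul_assoc]
    exact Nat.mul_le_mul (by omega) ih

def psumFlag {n : ℕ} (σ : Fin (n + 1) → ℕ) (j : Fin (n + 1)) : ℕ := ∑ i ∈ Finset.Iic j, σ i

theorem psumFlag_zero {n : ℕ} (σ : Fin (n + 1) → ℕ) : psumFlag σ 0 = σ 0 := by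
  have : Finset.Iic (0 : Fin (n + 1)) = {0} := by ext i; simp
  simp [psumFlag, this]

theorem psumFlag_last {n : ℕ} (σ : Fin (n + 1) → ℕ) : psumFlag σ (Fin.last n) = ∑ i, σ i := by
  have : Finset.Iic (Fin.last n) = Finset.univ := by ext i; simp [Fin.le_last]
  simp [psumFlag, this]

theorem psumFlag_succ {n : ℕ} (σ : Fin (n + 1) → ℕ) (j : Fin n) :
    psumFlag σ j.succ = psumFlag σ j.castSucc + σ j.succ := by
  have : Finset.Iic j.succ = insert j.succ (Finset.Iic j.castSucc) := by
    ext i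
    simp only [Finset.mem_Iic, Finset.mem_insert, Fin.le_def, Fin.ext_iff, Fin.val_succ,
      Fin.val_castSucc]
    omega
  rw [psumFlag, this, Finset.sum_insert, add_comm]
  · rfl
  · simp [Fin.le_def]

theorem flagDeg_eq_aux {C : Type*} [Fintype C] [PartialOrder C] (rk : C → ℕ)
    (hgraded : ∀ x y : C, x ⋖ y → rk y = rk x + 1)
    (k : ℕ) (hpure : ∀ x : C, IsMax x → rk x = k) {n : ℕ} (σ : Fin (n + 1) → ℕ)
    (hsum : ∑ i, σ i = k) (F : C) [Fintype {M : C // IsMax M ∧ F ≤ M}] :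
    flagDeg rk σ F = ∑ M : {M : C // IsMax M ∧ F ≤ M},
      Nat.card (FlagTo rk (psumFlag σ) F M.1) := by
  classical
  have hsm := rk_strictMono_aux rk hgraded
  rw [← Nat.card_sigma]
  have hmax : ∀ x : C, rk x = k → IsMax x := by
    intro x hx
    rw [isMax_iff_forall_not_lt]
    intro y hxy
    obtain ⟨M, hyM, hM⟩ := Finite.exists_le_maximal (p := fun _ : C => True) (a := y) trivial
    have hM' : IsMax M := by simpa using hM
    have h1 := hsm (lt_of_lt_of_le hxy hyM)
    rw [hpure M hM'] at h1
    omega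
  refine Nat.card_congr
    { toFun := fun X => ⟨⟨X.1 (Fin.last n), hmax _ ((X.2.2.2 _).trans
          ((psumFlag_last σ).trans hsum)), by
          have h := X.2.2.1.monotone (Fin.le_last 0)
          rwa [X.2.1] at h⟩, ⟨X.1, X.2.1, rfl, X.2.2⟩⟩
      invFun := fun Y => ⟨Y.2.1, Y.2.2.1, Y.2.2.2.2⟩
      left_inv := fun X => rfl
      right_inv := fun Y => by
        obtain ⟨⟨y, hy⟩, ⟨Z, hZ0, hZ1, hZ⟩⟩ := Y
        dsimp only at hZ1
        subst hZ1
        rfl }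

end FlagHelpers

/-- Let `C` be a finite graded poset with minimum `⊥` (`rk ⊥ = 0` and `rk` increases
by one along covering relations), pure of rank `k`, such that for every `x > ⊥` and
every maximal element `m ≥ x` the interval `[x, m]` is isomorphic to a Boolean
lattice.  Let `σ` be a composition of `k` and `π` a rearrangement of `σ` with
`σ_1 < π_1`.  If `F` has rank `σ_1`, `G` has rank `π_1` and `F < G`, then
`d^σ(F) ≥ d^π(G)`. -/
theorem flagDeg_le_of_lt_simple
    {C : Type*} [Fintype C] [PartialOrder C] [OrderBot C]
    (rk : C → ℕ)
    (hrk0 : rk (⊥ : C) = 0)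
    (hgraded : ∀ x y : C, x ⋖ y → rk y = rk x + 1)
    (k : ℕ) (hpure : ∀ x : C, IsMax x → rk x = k)
    (hbool : ∀ x mx : C, ⊥ < x → IsMax mx → x ≤ mx →
      ∃ n : ℕ, Nonempty (Set.Icc x mx ≃o Finset (Fin n)))
    {m : ℕ} [NeZero m] (σ π : Fin m → ℕ)
    (hpos : ∀ i, 0 < σ i) (hsum : ∑ i, σ i = k)
    (e : Equiv.Perm (Fin m)) (hπ : π = σ ∘ e)
    (h1 : σ 0 < π 0)
    (F G : C) (hF : rk F = σ 0) (hG : rk G = π 0) (hFG : F < G) :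
    flagDeg rk π G ≤ flagDeg rk σ F := by
  classical
  obtain ⟨n, rfl⟩ : ∃ n, m = n + 1 := ⟨m - 1, by have := NeZero.pos m; omega⟩
  have hposπ : ∀ i, 0 < π i := fun i => by rw [hπ]; exact hpos _
  have hsumπ : ∑ i, π i = k := by
    rw [hπ, ← hsum]; exact Equiv.sum_comp e σ
  have hprod : ∏ i, (π i).factorial = ∏ i, (σ i).factorial := by
    rw [hπ]; exact Equiv.prod_comp e (fun i => (σ i).factorial)
  have hsm := rk_strictMono_aux rk hgraded
  have count : ∀ (τ : Fin (n + 1) → ℕ) (_ : ∀ i, 0 < τ i) (_ : ∑ i, τ i = k) (x M : C)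
      (_ : rk x = τ 0) (_ : IsMax M) (_ : x ≤ M),
      Nat.card (FlagTo rk (psumFlag τ) x M) * ∏ i, (τ i).factorial
        = (k - τ 0).factorial * (τ 0).factorial := by
    intro τ hτ hτs x M hx hM hxM
    have h := flagTo_card_aux rk hgraded M n (psumFlag τ)
      (by
        rw [Fin.strictMono_iff_lt_succ]
        intro i
        rw [psumFlag_succ]
        have := hτ i.succ
        omega) x
      (by
        intro y hxy hyM
        refine hbool y M ?_ hM hyM
        refine lt_of_lt_of_le (bot_lt_iff_ne_bot.2 ?_) hxy
        rintro rfl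
        have := hτ 0
        omega) hxM (by rw [psumFlag_zero, hx]) (by rw [psumFlag_last, hτs, hpure M hM])
    rw [psumFlag_last, psumFlag_zero, hτs] at h
    simp only [psumFlag_succ, Nat.add_sub_cancel_left] at h
    rw [Fin.prod_univ_succ, ← h]
    ring
  have hab : σ 0 + π 0 ≤ k := by
    have hne : (0 : Fin (n + 1)) ≠ e 0 := by
      intro h0
      rw [hπ, Function.comp_apply, ← h0] at h1
      exact lt_irrefl _ h1
    have h2 := Finset.sum_le_sum_of_subset (f := σ) (Finset.subset_univ {0, e 0})
    rw [Finset.sum_pair hne, hsum] at h2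
    rw [hπ]
    exact h2
  rw [flagDeg_eq_aux rk hgraded k hpure π hsumπ G, flagDeg_eq_aux rk hgraded k hpure σ hsum F]
  have hle : ∀ M : C, IsMax M → G ≤ M →
      Nat.card (FlagTo rk (psumFlag π) G M) ≤ Nat.card (FlagTo rk (psumFlag σ) F M) := by
    intro M hM hGM
    have hA := count π hposπ hsumπ G M hG hM hGM
    have hB := count σ hpos hsum F M hF hM (hFG.le.trans hGM)
    rw [hprod] at hA
    have hQ : 0 < ∏ i, (σ i).factorial := Finset.prod_pos (fun i _ => Nat.factorial_pos _)
    refine Nat.le_of_mul_le_mul_right ?_ hQ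
    rw [hA, hB]
    have h := fact_aux (σ 0) (π 0) (k - σ 0 - π 0) h1
    rwa [show σ 0 + (k - σ 0 - π 0) = k - π 0 by omega,
      show π 0 + (k - σ 0 - π 0) = k - σ 0 by omega] at h
  let ι : {M : C // IsMax M ∧ G ≤ M} ↪ {M : C // IsMax M ∧ F ≤ M} :=
    ⟨fun M => ⟨M.1, M.2.1, hFG.le.trans M.2.2⟩, fun A B h => by
      apply Subtype.ext
      exact congrArg (fun z => z.1) h⟩
  calc _ ≤ ∑ M : {M : C // IsMax M ∧ G ≤ M},
        Nat.card (FlagTo rk (psumFlag σ) F (ι M).1) :=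
        Finset.sum_le_sum (fun M _ => hle M.1 M.2.1 M.2.2)
    _ = ∑ M ∈ Finset.univ.map ι, Nat.card (FlagTo rk (psumFlag σ) F M.1) := by
        rw [Finset.sum_map]
    _ ≤ _ := Finset.sum_le_sum_of_subset (Finset.subset_univ _)
end
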